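/- arXiv:2403.00120 — 2 statements merged into one kernel-verified Lean document; each statement's English description precedes it below -/
import Mathlib

section
/- Let q be a prime power, F = F_q(X), j ≥ 1, and a ≥ 0. Among two-dimensional subspaces V ⊂ F^3 of height 2j, the proportion ν_j(a) of those with first successive minimum μ_1(V) = j - a equals: 0 if a > j; q^{-2a+1} if a = j; q^{-2a}(q - q^{-1}) if 0 < a < j; and q^{-2a}(1 - q^{-1}) if a = 0. -/
open Polynomial

/-- A nonzero vector of `𝔽_q(X)³` has height `l` if, after scaling to a coprime triple of
polynomials, the maximum of their degrees is `l`. -/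
def VecHeight {F : Type*} [Field F] (v : Fin 3 → RatFunc F) (l : ℕ) : Prop :=
  ∃ (c : RatFunc F) (A : Fin 3 → Polynomial F), c ≠ 0 ∧
    (∀ d : Polynomial F, (∀ i, d ∣ A i) → IsUnit d) ∧
    (∀ i, v i = c * algebraMap (Polynomial F) (RatFunc F) (A i)) ∧
    (Finset.univ.sup fun i => (A i).degree) = (l : WithBot ℕ)

/-- `V` is a two-dimensional subspace of `𝔽_q(X)³` of height `m`: its one-dimensional
orthogonal complement is spanned by a coprime polynomial triple of maximal degree `m`. -/
def TwoDimOfHeight {F : Type*} [Field F]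
    (V : Submodule (RatFunc F) (Fin 3 → RatFunc F)) (m : ℕ) : Prop :=
  Module.finrank (RatFunc F) V = 2 ∧
  ∃ B : Fin 3 → Polynomial F,
    (∀ d : Polynomial F, (∀ i, d ∣ B i) → IsUnit d) ∧
    (Finset.univ.sup fun i => (B i).degree) = (m : WithBot ℕ) ∧
    ∀ v ∈ V, ∑ i, algebraMap (Polynomial F) (RatFunc F) (B i) * v i = 0

/-- `μ₁(V) = μ`: the least height of a nonzero vector of `V`. -/
def FirstMinimum {F : Type*} [Field F]
    (V : Submodule (RatFunc F) (Fin 3 → RatFunc F)) (μ : ℕ) : Prop :=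
  IsLeast {l : ℕ | ∃ v ∈ V, v ≠ 0 ∧ VecHeight v l} μ

namespace PFM

open Matrix

variable {F : Type*} [Field F]

/-- primitive triple -/
def Prim (A : Fin 3 → F[X]) : Prop := ∀ d : F[X], (∀ i, d ∣ A i) → IsUnit d

/-- height of a triple -/
def Ht (A : Fin 3 → F[X]) (n : ℕ) : Prop :=
  (Finset.univ.sup fun i => (A i).degree) = (n : WithBot ℕ)

lemma prim_of_bezout {A u : Fin 3 → F[X]} (h : ∑ i, u i * A i = 1) : Prim A := by
  intro d hd
  apply isUnit_of_dvd_one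
  rw [← h]
  exact Finset.dvd_sum fun i _ => Dvd.dvd.mul_left (hd i) _

lemma exists_gen (A : Fin 3 → F[X]) :
    ∃ (g : F[X]) (u : Fin 3 → F[X]), (∀ i, g ∣ A i) ∧ ∑ i, u i * A i = g := by
  let I := Ideal.span (Set.range A)
  let g := Submodule.IsPrincipal.generator I
  have hg : g ∈ I := Submodule.IsPrincipal.generator_mem I
  have h2 : ∀ i, g ∣ A i := fun i =>
    (Submodule.IsPrincipal.mem_iff_generator_dvd I).1 (Ideal.subset_span ⟨i, rfl⟩)
  obtain ⟨u, hu⟩ := (Ideal.mem_span_range_iff_exists_fun).1 hg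
  exact ⟨g, u, h2, hu⟩

lemma Prim.bezout {A : Fin 3 → F[X]} (h : Prim A) : ∃ u : Fin 3 → F[X], ∑ i, u i * A i = 1 := by
  obtain ⟨g, u, h1, h2⟩ := exists_gen A
  obtain ⟨v, hv⟩ := (h g h1).exists_left_inv
  refine ⟨fun i => v * u i, ?_⟩
  rw [← hv, ← h2, Finset.mul_sum]
  simp [mul_assoc]

lemma Prim.ne_zero {A : Fin 3 → F[X]} (h : Prim A) : A ≠ 0 := by
  rintro rfl
  exact not_isUnit_zero (h 0 (by simp))

lemma exists_factor {A : Fin 3 → F[X]} (hA : A ≠ 0) :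
    ∃ (g : F[X]) (A' : Fin 3 → F[X]), g.Monic ∧ Prim A' ∧ A = g • A' := by
  obtain ⟨g, u, h1, h2⟩ := exists_gen A
  choose A' hA' using h1
  have hg : g ≠ 0 := by
    rintro rfl
    apply hA
    funext i
    simpa using hA' i
  have hb : ∑ i, u i * A' i = 1 := by
    apply mul_left_cancel₀ hg
    rw [mul_one]
    conv_rhs => rw [← h2]
    rw [Finset.mul_sum]
    refine Finset.sum_congr rfl fun i _ => ?_
    rw [hA' i]; ring
  have hc : g.leadingCoeff ≠ 0 := by simpa using hg
  refine ⟨g * C g.leadingCoeff⁻¹, C g.leadingCoeff • A', monic_mul_leadingCoeff_inv hg, ?_, ?_⟩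
  · apply prim_of_bezout (u := fun i => C g.leadingCoeff⁻¹ * u i)
    rw [← hb]
    refine Finset.sum_congr rfl fun i _ => ?_
    have : C g.leadingCoeff⁻¹ * C g.leadingCoeff = 1 := by
      rw [← C_mul, inv_mul_cancel₀ hc, C_1]
    simp only [Pi.smul_apply, smul_eq_mul]
    linear_combination (u i * A' i) * this
  · funext i
    have : C g.leadingCoeff⁻¹ * C g.leadingCoeff = 1 := by
      rw [← C_mul, inv_mul_cancel₀ hc, C_1]
    simp only [Pi.smul_apply, smul_eq_mul]
    rw [hA' i]
    linear_combination (-g * A' i) * this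

lemma ht_iff {A : Fin 3 → F[X]} {n : ℕ} :
    Ht A n ↔ (∀ i, A i ∈ degreeLT F (n + 1)) ∧ ¬ (∀ i, A i ∈ degreeLT F n) := by
  have key : ∀ k : ℕ, (∀ i, A i ∈ degreeLT F k) ↔
      (Finset.univ.sup fun i => (A i).degree) < (k : WithBot ℕ) := by
    intro k
    rw [Finset.sup_lt_iff (show (⊥ : WithBot ℕ) < (k : WithBot ℕ) from WithBot.bot_lt_coe k)]
    simp [mem_degreeLT]
  rw [key, key, Ht, not_lt]
  constructor
  · intro h
    rw [h]
    exact ⟨by exact_mod_cast Nat.lt_succ_self n, le_rfl⟩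
  · rintro ⟨h1, h2⟩
    refine le_antisymm ?_ h2
    generalize (Finset.univ.sup fun i => (A i).degree) = s at *
    induction s using WithBot.recBotCoe with
    | bot => exact bot_le
    | coe s =>
      have : s < n + 1 := Nat.cast_lt.1 (show (Nat.cast s : WithBot ℕ) < _ from h1)
      have : s ≤ n := by omega
      exact (Nat.cast_le.2 this : (Nat.cast s : WithBot ℕ) ≤ _)

lemma Ht.degree_le {A : Fin 3 → F[X]} {n : ℕ} (h : Ht A n) (i : Fin 3) :
    (A i).degree ≤ n := by
  rw [← h]
  exact Finset.le_sup (f := fun i => (A i).degree) (Finset.mem_univ i)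

lemma Ht.exists {A : Fin 3 → F[X]} {n : ℕ} (h : Ht A n) : ∃ i, (A i).degree = n := by
  obtain ⟨i, -, hi⟩ := Finset.exists_mem_eq_sup Finset.univ Finset.univ_nonempty
    (fun i => (A i).degree)
  exact ⟨i, by rw [← h, hi]⟩

lemma ht_of {A : Fin 3 → F[X]} {n : ℕ} (h1 : ∀ i, (A i).degree ≤ n)
    (h2 : ∃ i, (A i).degree = n) : Ht A n := by
  apply le_antisymm
  · exact Finset.sup_le fun i _ => h1 i
  · obtain ⟨i, hi⟩ := h2
    rw [← hi]
    exact Finset.le_sup (f := fun i => (A i).degree) (Finset.mem_univ i)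

lemma Ht.unique {A : Fin 3 → F[X]} {n m : ℕ} (h : Ht A n) (h' : Ht A m) : n = m := by
  have := h.symm.trans h'
  exact_mod_cast this

lemma exists_ht {A : Fin 3 → F[X]} (hA : A ≠ 0) : ∃ n, Ht A n := by
  obtain ⟨i, -, hi⟩ := Finset.exists_mem_eq_sup Finset.univ Finset.univ_nonempty
    (fun i => (A i).degree)
  obtain ⟨k, hk⟩ : ∃ k, A k ≠ 0 := by
    by_contra! h
    exact hA (funext h)
  have hne : (A i).degree ≠ ⊥ := by
    intro hb
    have := Finset.le_sup (f := fun i => (A i).degree) (Finset.mem_univ k)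
    rw [hi] at this
    simp only [hb, le_bot_iff, degree_eq_bot] at this
    exact hk this
  refine ⟨(A i).natDegree, ?_⟩
  rw [Ht, hi]
  exact degree_eq_natDegree (by simpa using hne)

lemma Ht.ne_zero {A : Fin 3 → F[X]} {n : ℕ} (h : Ht A n) : A ≠ 0 := by
  rintro rfl
  obtain ⟨i, hi⟩ := h.exists
  simp at hi

lemma Ht.smul {A : Fin 3 → F[X]} {n : ℕ} (h : Ht A n) {g : F[X]} (hg : g ≠ 0) :
    Ht (g • A) (g.natDegree + n) := by
  apply ht_of
  · intro i
    simp only [Pi.smul_apply, smul_eq_mul, degree_mul]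
    rw [degree_eq_natDegree hg]
    push_cast
    exact add_le_add le_rfl (h.degree_le i)
  · obtain ⟨i, hi⟩ := h.exists
    refine ⟨i, ?_⟩
    simp only [Pi.smul_apply, smul_eq_mul, degree_mul]
    rw [degree_eq_natDegree hg, hi]
    push_cast
    rfl

lemma parallel {A B : Fin 3 → F[X]} (hA : Prim A) (h : ∀ i j, A i * B j = A j * B i) :
    ∃ c : F[X], B = c • A := by
  obtain ⟨u, hu⟩ := hA.bezout
  refine ⟨∑ i, u i * B i, ?_⟩
  funext j
  simp only [Pi.smul_apply, smul_eq_mul]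
  rw [← one_mul (B j), ← hu, Finset.sum_mul, Finset.sum_mul]
  refine Finset.sum_congr rfl fun i _ => ?_
  linear_combination u i * h i j

lemma prim_smul {A : Fin 3 → F[X]} {c : F[X]} (h : Prim (c • A)) : IsUnit c :=
  h c fun i => by simp

lemma parallel_prim {A B : Fin 3 → F[X]} (hA : Prim A) (hB : Prim B)
    (h : ∀ i j, A i * B j = A j * B i) :
    ∃ c : Fˣ, B = C (c : F) • A := by
  obtain ⟨c, rfl⟩ := parallel hA h
  obtain ⟨r, hr, rfl⟩ := Polynomial.isUnit_iff.1 (prim_smul hB)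
  exact ⟨hr.unit, rfl⟩

lemma Prim.smul_unit {A : Fin 3 → F[X]} (hA : Prim A) (c : Fˣ) : Prim (C (c : F) • A) := by
  intro d hd
  apply hA
  intro i
  have : A i = C (↑c⁻¹ : F) * (C (c : F) • A) i := by
    simp only [Pi.smul_apply, smul_eq_mul]
    rw [← mul_assoc, ← C_mul]
    simp
  rw [this]
  exact (hd i).mul_left _

lemma Ht.smul_unit {A : Fin 3 → F[X]} {n : ℕ} (hA : Ht A n) (c : Fˣ) :
    Ht (C (c : F) • A) n := by
  have := hA.smul (g := C (c : F)) (by simp)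
  simpa using this

lemma forall3 {P : Fin 3 → Prop} (h0 : P 0) (h1 : P 1) (h2 : P 2) : ∀ i, P i := by
  intro i
  fin_cases i <;> assumption

lemma forall33 {P : Fin 3 → Fin 3 → Prop} (hs : ∀ i j, P i j → P j i) (hr : ∀ i, P i i)
    (h0 : P 0 1) (h1 : P 0 2) (h2 : P 1 2) : ∀ i j, P i j :=
  forall3 (forall3 (hr 0) h0 h1) (forall3 (hs _ _ h0) (hr 1) h2)
    (forall3 (hs _ _ h1) (hs _ _ h2) (hr 2))

/-- Two orthogonal vectors of small total height are parallel. -/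
lemma cross_zero {A A' B : Fin 3 → F[X]} {l l' m : ℕ} (hB : Prim B) (hBm : Ht B m)
    (hA : ∀ i, (A i).degree ≤ l) (hA' : ∀ i, (A' i).degree ≤ l')
    (h : ∑ i, A i * B i = 0) (h' : ∑ i, A' i * B i = 0) (hlt : l + l' < m) :
    ∀ i j, A i * A' j = A j * A' i := by
  let N : Fin 3 → F[X] := ![A 1 * A' 2 - A 2 * A' 1, A 2 * A' 0 - A 0 * A' 2,
    A 0 * A' 1 - A 1 * A' 0]
  have hpar : ∀ i j, B i * N j = B j * N i := by
    simp only [Fin.sum_univ_three] at h h'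
    have h01 : B 0 * N 1 = B 1 * N 0 := by
      simp only [N, Matrix.cons_val]
      linear_combination A 2 * h' - A' 2 * h
    have h02 : B 0 * N 2 = B 2 * N 0 := by
      simp only [N, Matrix.cons_val]
      linear_combination -A 1 * h' + A' 1 * h
    have h12 : B 1 * N 2 = B 2 * N 1 := by
      simp only [N, Matrix.cons_val]
      linear_combination A 0 * h' - A' 0 * h
    exact forall33 (fun i j h => h.symm) (fun i => rfl) h01 h02 h12
  have hd : ∀ i j, (A i * A' j).degree ≤ ((l + l' : ℕ) : WithBot ℕ) := by
    intro i j
    rw [degree_mul]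
    push_cast
    exact add_le_add (hA i) (hA' j)
  have hN : ∀ i, (N i).degree ≤ ((l + l' : ℕ) : WithBot ℕ) := by
    have hs : ∀ i j i' j', (A i * A' j - A i' * A' j').degree ≤ ((l + l' : ℕ) : WithBot ℕ) :=
      fun i j i' j' => (degree_sub_le _ _).trans (max_le (hd _ _) (hd _ _))
    exact forall3 (hs 1 2 2 1) (hs 2 0 0 2) (hs 0 1 1 0)
  obtain ⟨c, hc⟩ := parallel hB hpar
  have hc0 : c = 0 := by
    by_contra hc0
    have h1 := hBm.smul hc0
    rw [← hc] at h1
    obtain ⟨i, hi⟩ := h1.exists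
    have h2 := hN i
    rw [hi] at h2
    have h2' : c.natDegree + m ≤ l + l' := by exact_mod_cast h2
    omega
  rw [hc0, zero_smul] at hc
  have e0 : N 0 = 0 := by rw [hc]; rfl
  have e1 : N 1 = 0 := by rw [hc]; rfl
  have e2 : N 2 = 0 := by rw [hc]; rfl
  simp only [N, Matrix.cons_val] at e0 e1 e2
  exact forall33 (fun i j h => h.symm) (fun i => rfl) (by linear_combination e2)
    (by linear_combination -e1) (by linear_combination e0)

section counting

set_option linter.unusedSectionVars false

/-- triples in `W` of degree `< n` -/
def SLT (W : (Fin 3 → F[X]) → Prop) (n : ℕ) : Set (Fin 3 → F[X]) :=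
  {B | W B ∧ ∀ i, B i ∈ degreeLT F n}

/-- triples in `W` of height `n` -/
def SE (W : (Fin 3 → F[X]) → Prop) (n : ℕ) : Set (Fin 3 → F[X]) :=
  {B | W B ∧ Ht B n}

/-- primitive triples in `W` of height `n` -/
def SP (W : (Fin 3 → F[X]) → Prop) (n : ℕ) : Set (Fin 3 → F[X]) :=
  {B | W B ∧ Prim B ∧ Ht B n}

variable [Fintype F]

instance finite_degreeLT (n : ℕ) : Finite (degreeLT F n) :=
  Finite.of_equiv _ (degreeLTEquiv F n).toEquiv.symm

lemma card_degreeLT (n : ℕ) : Nat.card (degreeLT F n) = Fintype.card F ^ n := by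
  rw [Nat.card_congr (degreeLTEquiv F n).toEquiv]
  simp

lemma slt_finite (W : (Fin 3 → F[X]) → Prop) (n : ℕ) : (SLT W n).Finite := by
  apply Set.Finite.subset (s := {B : Fin 3 → F[X] | ∀ i, B i ∈ (degreeLT F n : Set F[X])})
  · exact Set.Finite.pi' fun i => Set.finite_coe_iff.1 (finite_degreeLT n)
  · intro B hB i
    exact hB.2 i

lemma se_subset (W : (Fin 3 → F[X]) → Prop) (n : ℕ) : SE W n ⊆ SLT W (n + 1) :=
  fun _ hB => ⟨hB.1, (ht_iff.1 hB.2).1⟩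

lemma sp_subset (W : (Fin 3 → F[X]) → Prop) (n : ℕ) : SP W n ⊆ SE W n :=
  fun _ hB => ⟨hB.1, hB.2.2⟩

lemma se_finite (W : (Fin 3 → F[X]) → Prop) (n : ℕ) : (SE W n).Finite :=
  (slt_finite W (n + 1)).subset (se_subset W n)

lemma sp_finite (W : (Fin 3 → F[X]) → Prop) (n : ℕ) : (SP W n).Finite :=
  (se_finite W n).subset (sp_subset W n)

lemma se_card (W : (Fin 3 → F[X]) → Prop) (n : ℕ) :
    (SE W n).ncard + (SLT W n).ncard = (SLT W (n + 1)).ncard := by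
  have hsub : SLT W n ⊆ SLT W (n + 1) := fun B hB =>
    ⟨hB.1, fun i => degreeLT_mono (Nat.le_succ n) (hB.2 i)⟩
  have : SE W n = SLT W (n + 1) \ SLT W n := by
    ext B
    simp only [SE, SLT, Set.mem_ofPred_eq, Set.mem_sdiff, ht_iff]
    tauto
  rw [this]
  exact Set.ncard_sdiff_add_ncard_of_subset hsub (slt_finite W (n + 1))

lemma monic_card (k : ℕ) :
    Nat.card {g : F[X] // g.Monic ∧ g.natDegree = k} = Fintype.card F ^ k := by
  rw [Nat.card_congr (monicEquivDegreeLT k), card_degreeLT]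

instance monic_finite (k : ℕ) : Finite {g : F[X] // g.Monic ∧ g.natDegree = k} :=
  Finite.of_equiv _ (monicEquivDegreeLT k).symm

lemma se_sum (W : (Fin 3 → F[X]) → Prop) (hW : ∀ (g : F[X]) B, g ≠ 0 → (W (g • B) ↔ W B))
    (n : ℕ) :
    (SE W n).ncard = ∑ k ∈ Finset.range (n + 1), Fintype.card F ^ k * (SP W (n - k)).ncard := by
  let f : (Σ k : Fin (n + 1), {g : F[X] // g.Monic ∧ g.natDegree = (k : ℕ)} × SP W (n - k)) →
      SE W n := fun x => ⟨x.2.1.1 • x.2.2.1, by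
    obtain ⟨k, ⟨g, hg, hk⟩, ⟨B, hB⟩⟩ := x
    refine ⟨(hW g B hg.ne_zero).2 hB.1, ?_⟩
    have := hB.2.2.smul hg.ne_zero
    have e : g.natDegree + (n - (k : ℕ)) = n := by omega
    rw [e] at this
    exact this⟩
  have hdvd : ∀ (g g' : F[X]) (B B' : Fin 3 → F[X]), Prim B → g • B = g' • B' → g' ∣ g := by
    intro g g' B B' hB h
    obtain ⟨u, hu⟩ := hB.bezout
    refine ⟨∑ i, u i * B' i, ?_⟩
    rw [← mul_one g, ← hu, Finset.mul_sum, Finset.mul_sum]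
    refine Finset.sum_congr rfl fun i _ => ?_
    have := congrFun h i
    simp only [Pi.smul_apply, smul_eq_mul] at this
    linear_combination u i * this
  have hf : Function.Bijective f := by
    constructor
    · rintro ⟨k, ⟨g, hg, hk⟩, ⟨B, hB⟩⟩ ⟨k', ⟨g', hg', hk'⟩, ⟨B', hB'⟩⟩ h
      have h : g • B = g' • B' := congrArg Subtype.val h
      have hgg : g = g' := eq_of_monic_of_associated hg hg'
        (associated_of_dvd_dvd (hdvd _ _ _ _ hB'.2.1 h.symm) (hdvd _ _ _ _ hB.2.1 h))
      subst hgg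
      have hBB : B = B' := smul_right_injective _ hg.ne_zero h
      subst hBB
      have : k = k' := Fin.ext (hk.symm.trans hk')
      subst this
      rfl
    · rintro ⟨B, hB⟩
      obtain ⟨g, A, hg, hA, rfl⟩ := exists_factor hB.2.ne_zero
      obtain ⟨m, hm⟩ := exists_ht hA.ne_zero
      have e := (hm.smul hg.ne_zero).unique hB.2
      refine ⟨⟨⟨g.natDegree, by omega⟩, ⟨g, hg, rfl⟩, ⟨A, (hW g A hg.ne_zero).1 hB.1, hA, ?_⟩⟩, ?_⟩
      · have : m = n - g.natDegree := by omega
        simpa [← this] using hm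
      · rfl
  have hfin : ∀ k : Fin (n + 1), Finite (SP W (n - k)) := fun k => (sp_finite W _).to_subtype
  rw [← Nat.card_coe_set_eq, ← Nat.card_congr (Equiv.ofBijective f hf), Nat.card_sigma,
    Finset.sum_range]
  refine Finset.sum_congr rfl fun k _ => ?_
  rw [Nat.card_prod, monic_card, Nat.card_coe_set_eq]

lemma sp_zero (W : (Fin 3 → F[X]) → Prop) (hW : ∀ (g : F[X]) B, g ≠ 0 → (W (g • B) ↔ W B)) :
    (SE W 0).ncard = (SP W 0).ncard := by
  rw [se_sum W hW]; simp

lemma sp_succ (W : (Fin 3 → F[X]) → Prop) (hW : ∀ (g : F[X]) B, g ≠ 0 → (W (g • B) ↔ W B))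
    (n : ℕ) :
    (SE W (n + 1)).ncard = (SP W (n + 1)).ncard + Fintype.card F * (SE W n).ncard := by
  rw [se_sum W hW, se_sum W hW, Finset.sum_range_succ', Finset.mul_sum, add_comm]
  congr 1
  · simp
  · refine Finset.sum_congr rfl fun k _ => ?_
    rw [pow_succ, Nat.add_sub_add_right]
    ring

/-- the trivial condition -/
def WT : (Fin 3 → F[X]) → Prop := fun _ => True

/-- orthogonality to `A` -/
def WA (A : Fin 3 → F[X]) : (Fin 3 → F[X]) → Prop := fun B => ∑ i, A i * B i = 0

lemma WT_smul : ∀ (g : F[X]) (B : Fin 3 → F[X]), g ≠ 0 → (WT (g • B) ↔ WT B) := fun _ _ _ => Iff.rfl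

lemma WA_smul (A : Fin 3 → F[X]) : ∀ (g : F[X]) B, g ≠ 0 → (WA A (g • B) ↔ WA A B) := by
  intro g B hg
  have : ∑ i, A i * (g • B) i = g * ∑ i, A i * B i := by
    rw [Finset.mul_sum]
    refine Finset.sum_congr rfl fun i _ => ?_
    simp only [Pi.smul_apply, smul_eq_mul]
    ring
  rw [WA, this, WA, mul_eq_zero, or_iff_right hg]

/-- subtypes of bounded triples -/
def sltEquiv (W : (Fin 3 → F[X]) → Prop) (n : ℕ) :
    SLT W n ≃ {B : Fin 3 → degreeLT F n // W (fun i => (B i : F[X]))} where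
  toFun B := ⟨fun i => ⟨B.1 i, B.2.2 i⟩, B.2.1⟩
  invFun B := ⟨fun i => (B.1 i : F[X]), B.2, fun i => (B.1 i).2⟩
  left_inv _ := rfl
  right_inv _ := rfl

lemma slt_WT_card (n : ℕ) : (SLT (WT (F := F)) n).ncard = Fintype.card F ^ (3 * n) := by
  rw [← Nat.card_coe_set_eq, Nat.card_congr (sltEquiv _ n)]
  rw [Nat.card_congr (Equiv.subtypeUnivEquiv (p := fun B : Fin 3 → degreeLT F n => WT (fun i => (B i : F[X])))
    (fun _ => trivial)), Nat.card_fun, card_degreeLT]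
  simp [← pow_mul, mul_comm]

lemma slt_surj {A : Fin 3 → F[X]} {l n : ℕ} (hA : Prim A) (hl : Ht A l) (hn : l ≤ n)
    (c : F[X]) (hc : c ∈ degreeLT F (n + l)) :
    ∃ B : Fin 3 → F[X], (∀ i, B i ∈ degreeLT F n) ∧ ∑ i, A i * B i = c := by
  obtain ⟨u, hu⟩ := hA.bezout
  obtain ⟨k, hk⟩ := hl.exists
  have hk0 : A k ≠ 0 := by
    intro h
    simp [h] at hk
  let s := Finset.univ.erase k
  have hsum : ∀ f : Fin 3 → F[X], ∑ i, f i = f k + ∑ i ∈ s, f i := fun f =>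
    (Finset.add_sum_erase _ _ (Finset.mem_univ k)).symm
  let R : Fin 3 → F[X] := fun i => (c * u i) % A k
  let Q : Fin 3 → F[X] := fun i => (c * u i) / A k
  have hQR : ∀ i, A k * Q i + R i = c * u i := fun i => EuclideanDomain.div_add_mod _ _
  let b := c * u k + ∑ i ∈ s, Q i * A i
  let B : Fin 3 → F[X] := fun i => if i = k then b else R i
  have hBk : B k = b := by simp [B]
  have hBs : ∀ i ∈ s, B i = R i := by
    intro i hi
    have : i ≠ k := (Finset.mem_erase.1 hi).1
    simp [B, this]
  have hdot : ∑ i, A i * B i = c := by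
    rw [hsum, hBk, Finset.sum_congr rfl (fun i hi => by rw [hBs i hi])]
    have h1 : c = c * ∑ i, u i * A i := by rw [hu, mul_one]
    rw [hsum] at h1
    conv_rhs => rw [h1]
    simp only [b, mul_add, Finset.mul_sum]
    rw [add_assoc, ← Finset.sum_add_distrib]
    congr 1
    · ring
    · refine Finset.sum_congr rfl fun i _ => ?_
      linear_combination A i * hQR i
  have hR : ∀ i, (R i).degree < l := by
    intro i
    rw [← hk]
    exact EuclideanDomain.mod_lt _ hk0
  refine ⟨B, ?_, hdot⟩
  intro i
  by_cases hi : i = k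
  · subst hi
    rw [hBk]
    have h2 : A i * b = c - ∑ j ∈ s, A j * R j := by
      rw [← hdot, hsum, hBk, Finset.sum_congr rfl (fun i hi => by rw [hBs i hi])]
      ring
    have h3 : A i * b ∈ degreeLT F (n + l) := by
      rw [h2]
      refine Submodule.sub_mem _ hc (Submodule.sum_mem _ fun j _ => ?_)
      rw [mem_degreeLT]
      by_cases hR0 : R j = 0
      · simp only [hR0, mul_zero, degree_zero]
        exact WithBot.bot_lt_coe _
      · have h4 := hR j
        rw [degree_eq_natDegree hR0] at h4
        have h4 : (R j).natDegree < l := by exact_mod_cast h4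
        rw [degree_mul, degree_eq_natDegree hR0]
        calc (A j).degree + ((R j).natDegree : WithBot ℕ) ≤ (l : WithBot ℕ) + (R j).natDegree :=
              add_le_add (hl.degree_le j) le_rfl
          _ < ((n + l : ℕ) : WithBot ℕ) := by
              have : l + (R j).natDegree < n + l := by omega
              exact_mod_cast this
    rw [mem_degreeLT] at h3 ⊢
    by_cases hb : b = 0
    · rw [hb, degree_zero]
      exact WithBot.bot_lt_coe _
    · rw [degree_mul, hk, degree_eq_natDegree hb] at h3
      rw [degree_eq_natDegree hb]
      have h3 : l + b.natDegree < n + l := by exact_mod_cast h3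
      have : b.natDegree < n := by omega
      exact_mod_cast this
  · have : B i = R i := by simp [B, hi]
    rw [this, mem_degreeLT]
    exact (hR i).trans_le (by exact_mod_cast hn)

/-- the dot product map on bounded triples -/
noncomputable def dotMap (A : Fin 3 → F[X]) (n : ℕ) : (Fin 3 → degreeLT F n) →ₗ[F] F[X] where
  toFun B := ∑ i, A i * (B i : F[X])
  map_add' B B' := by simp [mul_add, Finset.sum_add_distrib]
  map_smul' r B := by simp [Finset.smul_sum]

lemma slt_WA_card {A : Fin 3 → F[X]} {l n : ℕ} (hA : Prim A) (hl : Ht A l) (hn : l ≤ n) :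
    (SLT (WA A) n).ncard * Fintype.card F ^ (n + l) = Fintype.card F ^ (3 * n) := by
  have hr : LinearMap.range (dotMap A n) = degreeLT F (n + l) := by
    ext c
    constructor
    · rintro ⟨B, rfl⟩
      change ∑ i, A i * (B i : F[X]) ∈ _
      refine Submodule.sum_mem _ fun i _ => ?_
      by_cases hB0 : (B i : F[X]) = 0
      · simp [hB0]
      · have h4 := mem_degreeLT.1 (B i).2
        rw [degree_eq_natDegree hB0] at h4
        have h4 : (B i : F[X]).natDegree < n := by exact_mod_cast h4
        rw [mem_degreeLT, degree_mul, degree_eq_natDegree hB0]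
        calc (A i).degree + ((B i : F[X]).natDegree : WithBot ℕ)
            ≤ (l : WithBot ℕ) + (B i : F[X]).natDegree :=
              add_le_add (hl.degree_le i) le_rfl
          _ < ((n + l : ℕ) : WithBot ℕ) := by
              have : l + (B i : F[X]).natDegree < n + l := by omega
              exact_mod_cast this
    · intro hc
      obtain ⟨B, hB, h⟩ := slt_surj hA hl hn c hc
      exact ⟨fun i => ⟨B i, hB i⟩, h⟩
  have h1 : (SLT (WA A) n).ncard = Nat.card (LinearMap.ker (dotMap A n)) := by
    rw [← Nat.card_coe_set_eq, Nat.card_congr (sltEquiv _ n)]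
    rfl
  have h2 := Submodule.card_eq_card_quotient_mul_card (LinearMap.ker (dotMap A n))
  rw [Nat.card_congr (dotMap A n).quotKerEquivRange.toEquiv, hr, card_degreeLT, Nat.card_fun,
    card_degreeLT, ← h1] at h2
  rw [mul_comm] at h2
  simp only [Nat.card_eq_fintype_card, Fintype.card_fin, ← pow_mul] at h2
  rw [mul_comm 3, h2, mul_comm]

end counting

section subspaces

set_option linter.unusedSectionVars false

/-- the functional `v ↦ B · v` -/
noncomputable def functional (B : Fin 3 → F[X]) : (Fin 3 → RatFunc F) →ₗ[RatFunc F] RatFunc F where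
  toFun v := ∑ i, algebraMap F[X] (RatFunc F) (B i) * v i
  map_add' v w := by simp [mul_add, Finset.sum_add_distrib]
  map_smul' r v := by
    simp only [Pi.smul_apply, smul_eq_mul, Finset.mul_sum, RingHom.id_apply]
    exact Finset.sum_congr rfl fun i _ => by ring

/-- orthogonal complement of `B` -/
noncomputable def perp (B : Fin 3 → F[X]) : Submodule (RatFunc F) (Fin 3 → RatFunc F) :=
  LinearMap.ker (functional B)

lemma mem_perp {B : Fin 3 → F[X]} {v : Fin 3 → RatFunc F} :
    v ∈ perp B ↔ ∑ i, algebraMap F[X] (RatFunc F) (B i) * v i = 0 := Iff.rfl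

lemma finrank_perp {B : Fin 3 → F[X]} (hB : B ≠ 0) :
    Module.finrank (RatFunc F) (perp B) = 2 := by
  obtain ⟨k, hk⟩ : ∃ k, B k ≠ 0 := by
    by_contra! h
    exact hB (funext h)
  have hne : functional B ≠ 0 := by
    intro h
    have := LinearMap.congr_fun h (Pi.single k 1)
    simp [functional, Pi.single_apply] at this
    exact hk this
  have hs : LinearMap.range (functional B) = ⊤ :=
    LinearMap.range_eq_top.2 (LinearMap.surjective hne)
  have := LinearMap.finrank_range_add_finrank_ker (functional B)
  rw [hs, finrank_top, Module.finrank_self, Module.finrank_fin_fun] at this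
  change Module.finrank (RatFunc F) (LinearMap.ker (functional B)) = 2
  omega

lemma twoDim_iff {V : Submodule (RatFunc F) (Fin 3 → RatFunc F)} {m : ℕ} :
    TwoDimOfHeight V m ↔ ∃ B, Prim B ∧ Ht B m ∧ V = perp B := by
  constructor
  · rintro ⟨h2, B, hB, hm, h⟩
    refine ⟨B, hB, hm, ?_⟩
    apply Submodule.eq_of_le_of_finrank_eq
    · exact fun v hv => h v hv
    · rw [h2, finrank_perp (Prim.ne_zero hB)]
  · rintro ⟨B, hB, hm, rfl⟩
    exact ⟨finrank_perp hB.ne_zero, B, hB, hm, fun v hv => hv⟩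

lemma poly_mem_perp {A B : Fin 3 → F[X]} :
    (fun i => algebraMap F[X] (RatFunc F) (A i)) ∈ perp B ↔ ∑ i, A i * B i = 0 := by
  rw [mem_perp]
  simp only [← map_mul, ← map_sum]
  rw [map_eq_zero_iff _ (FaithfulSMul.algebraMap_injective F[X] (RatFunc F))]
  simp only [mul_comm]

lemma perp_eq {B B' : Fin 3 → F[X]} (h : perp B = perp B') : ∀ i j, B i * B' j = B j * B' i := by
  have key : ∀ A : Fin 3 → F[X], ∑ i, A i * B i = 0 → ∑ i, A i * B' i = 0 := by
    intro A hA
    rw [← poly_mem_perp] at hA ⊢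
    rwa [← h]
  have h0 := key ![B 1, - B 0, 0] (by
    simp only [Fin.sum_univ_three, Matrix.cons_val]; ring)
  have h1 := key ![B 2, 0, - B 0] (by
    simp only [Fin.sum_univ_three, Matrix.cons_val]; ring)
  have h2 := key ![0, B 2, - B 1] (by
    simp only [Fin.sum_univ_three, Matrix.cons_val]; ring)
  simp only [Fin.sum_univ_three, Matrix.cons_val] at h0 h1 h2
  exact forall33 (fun i j h => h.symm) (fun i => rfl) (by linear_combination -h0)
    (by linear_combination -h1) (by linear_combination -h2)

lemma perp_smul (B : Fin 3 → F[X]) (c : Fˣ) : perp (C (c : F) • B) = perp B := by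
  ext v
  rw [mem_perp, mem_perp]
  have : ∑ i, algebraMap F[X] (RatFunc F) ((C (c : F) • B) i) * v i =
      algebraMap F[X] (RatFunc F) (C (c : F)) *
        ∑ i, algebraMap F[X] (RatFunc F) (B i) * v i := by
    rw [Finset.mul_sum]
    refine Finset.sum_congr rfl fun i _ => ?_
    simp only [Pi.smul_apply, smul_eq_mul, map_mul, mul_assoc]
  rw [this, mul_eq_zero, or_iff_right]
  rw [map_eq_zero_iff _ (FaithfulSMul.algebraMap_injective F[X] (RatFunc F))]
  simp

lemma min_set (B : Fin 3 → F[X]) :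
    {l : ℕ | ∃ v ∈ perp B, v ≠ 0 ∧ VecHeight v l} =
      {l : ℕ | ∃ A, Prim A ∧ Ht A l ∧ ∑ i, A i * B i = 0} := by
  ext l
  constructor
  · rintro ⟨v, hv, hv0, c, A, hc, hA, hvA, hl⟩
    refine ⟨A, hA, hl, ?_⟩
    rw [← poly_mem_perp]
    have : v = c • (fun i => algebraMap F[X] (RatFunc F) (A i)) := funext hvA
    rw [this] at hv
    exact (Submodule.smul_mem_iff _ hc).1 hv
  · rintro ⟨A, hA, hl, h⟩
    refine ⟨_, poly_mem_perp.2 h, ?_, 1, A, one_ne_zero, hA, fun i => (one_mul _).symm, hl⟩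
    intro h0
    apply hA.ne_zero
    funext i
    exact FaithfulSMul.algebraMap_injective F[X] (RatFunc F)
      ((congrFun h0 i).trans (map_zero _).symm)

lemma firstMin_iff {B : Fin 3 → F[X]} {l m : ℕ} (hB : Prim B) (hm : Ht B m) (hl : 2 * l < m) :
    FirstMinimum (perp B) l ↔ ∃ A, Prim A ∧ Ht A l ∧ ∑ i, A i * B i = 0 := by
  rw [FirstMinimum, min_set]
  constructor
  · intro h
    exact h.1
  · intro h
    refine ⟨h, ?_⟩
    rintro l' ⟨A', hA', hl', h'⟩
    obtain ⟨A, hA, hAl, hAB⟩ := h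
    by_contra! hlt
    obtain ⟨c, hc⟩ := parallel_prim hA' hA (cross_zero hB hm hl'.degree_le hAl.degree_le h' hAB
      (by omega))
    have := (hl'.smul_unit c).unique (hc ▸ hAl)
    omega

variable [Fintype F]

lemma dotMap_apply (A : Fin 3 → F[X]) (n : ℕ) (B : Fin 3 → degreeLT F n) :
    dotMap A n B = ∑ i, A i * (B i : F[X]) := rfl

lemma exists_short {B : Fin 3 → F[X]} {j : ℕ} (hm : Ht B (2 * j)) :
    ∃ A : Fin 3 → F[X], A ≠ 0 ∧ (∀ i, A i ∈ degreeLT F (j + 1)) ∧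
      ∑ i, A i * B i = 0 := by
  by_contra! hno
  have hinj : Function.Injective (dotMap B (j + 1)) := by
    rw [injective_iff_map_eq_zero]
    intro A hA
    by_contra hA0
    refine hno (fun i => (A i : F[X])) ?_ (fun i => (A i).2) ?_
    · intro h
      apply hA0
      funext i
      exact Subtype.ext (congrFun h i)
    · rw [dotMap_apply] at hA
      rw [← hA]
      exact Finset.sum_congr rfl fun i _ => mul_comm _ _
  have hmem : ∀ A, dotMap B (j + 1) A ∈ degreeLT F (3 * j + 1) := by
    intro A
    rw [dotMap_apply]
    refine Submodule.sum_mem _ fun i _ => ?_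
    by_cases hA0 : (A i : F[X]) = 0
    · simp [hA0]
    · have h4 := mem_degreeLT.1 (A i).2
      rw [degree_eq_natDegree hA0] at h4
      have h4 : (A i : F[X]).natDegree < j + 1 := by exact_mod_cast h4
      rw [mem_degreeLT, degree_mul, degree_eq_natDegree hA0]
      calc (B i).degree + ((A i : F[X]).natDegree : WithBot ℕ)
          ≤ ((2 * j : ℕ) : WithBot ℕ) + (A i : F[X]).natDegree :=
            add_le_add (hm.degree_le i) le_rfl
        _ < ((3 * j + 1 : ℕ) : WithBot ℕ) := by
            have : 2 * j + (A i : F[X]).natDegree < 3 * j + 1 := by omega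
            exact_mod_cast this
  have hc := Nat.card_le_card_of_injective
    (fun A => (⟨dotMap B (j + 1) A, hmem A⟩ : degreeLT F (3 * j + 1)))
    (fun A A' h => hinj (congrArg Subtype.val h))
  rw [Nat.card_fun, card_degreeLT, card_degreeLT, Nat.card_eq_fintype_card, Fintype.card_fin,
    ← pow_mul] at hc
  have := (Nat.pow_le_pow_iff_right Fintype.one_lt_card).1 hc
  omega

lemma exists_min {B : Fin 3 → F[X]} {j : ℕ} (hm : Ht B (2 * j)) :
    ∃ l ≤ j, FirstMinimum (perp B) l := by
  obtain ⟨A, hA0, hAd, hAB⟩ := exists_short hm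
  obtain ⟨g, A', hg, hA', rfl⟩ := exists_factor hA0
  obtain ⟨l, hl⟩ := exists_ht hA'.ne_zero
  have hlj : l ≤ j := by
    obtain ⟨i, hi⟩ := (hl.smul hg.ne_zero).exists
    have := mem_degreeLT.1 (hAd i)
    rw [hi] at this
    have : g.natDegree + l < j + 1 := by exact_mod_cast this
    omega
  have hA'B : ∑ i, A' i * B i = 0 := by
    have := (WA_smul B g A' hg.ne_zero).1 (by
      rw [WA, ← hAB]
      exact Finset.sum_congr rfl fun i _ => mul_comm _ _)
    rw [← this]
    exact Finset.sum_congr rfl fun i _ => mul_comm _ _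
  have hne : {l : ℕ | ∃ A, Prim A ∧ Ht A l ∧ ∑ i, A i * B i = 0}.Nonempty :=
    ⟨l, A', hA', hl, hA'B⟩
  refine ⟨sInf {l : ℕ | ∃ A, Prim A ∧ Ht A l ∧ ∑ i, A i * B i = 0}, ?_, ?_⟩
  · exact (Nat.sInf_le (show l ∈ {l : ℕ | ∃ A, Prim A ∧ Ht A l ∧ ∑ i, A i * B i = 0} from
      ⟨A', hA', hl, hA'B⟩)).trans hlj
  · rw [FirstMinimum, min_set]
    exact ⟨Nat.sInf_mem hne, fun k hk => Nat.sInf_le hk⟩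

lemma smul_inj {B : Fin 3 → F[X]} (hB : B ≠ 0) {c d : Fˣ}
    (h : C (c : F) • B = C (d : F) • B) : c = d := by
  have := smul_left_injective F[X] hB h
  exact Units.ext (C_injective this)

/-- subspaces of height `m` -/
def SV (F : Type*) [Field F] (m : ℕ) : Set (Submodule (RatFunc F) (Fin 3 → RatFunc F)) :=
  {V | TwoDimOfHeight V m}

/-- subspaces of height `m` with first minimum `l` -/
def SVL (F : Type*) [Field F] (m l : ℕ) : Set (Submodule (RatFunc F) (Fin 3 → RatFunc F)) :=
  {V | TwoDimOfHeight V m ∧ FirstMinimum V l}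

lemma card_units : Nat.card Fˣ = Fintype.card F - 1 := by
  classical
  rw [Nat.card_eq_fintype_card, Fintype.card_units]

lemma sv_card (m : ℕ) :
    (SV F m).ncard * (Fintype.card F - 1) = (SP (WT (F := F)) m).ncard := by
  have hch : ∀ V : SV F m, ∃ B, Prim B ∧ Ht B m ∧ V.1 = perp B := fun V => twoDim_iff.1 V.2
  choose b hb1 hb2 hb3 using hch
  let f : SV F m × Fˣ → SP (WT (F := F)) m := fun x =>
    ⟨C (x.2 : F) • b x.1, trivial, (hb1 x.1).smul_unit x.2, (hb2 x.1).smul_unit x.2⟩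
  have hf : Function.Bijective f := by
    constructor
    · rintro ⟨V, c⟩ ⟨V', c'⟩ h
      have h : C (c : F) • b V = C (c' : F) • b V' := congrArg Subtype.val h
      have hV : V = V' := by
        apply Subtype.ext
        rw [hb3, hb3 V', ← perp_smul _ c, h, perp_smul]
      subst hV
      rw [smul_inj (hb1 V).ne_zero h]
    · rintro ⟨B, -, hB, hm⟩
      let V : SV F m := ⟨perp B, twoDim_iff.2 ⟨B, hB, hm, rfl⟩⟩
      obtain ⟨c, hc⟩ := parallel_prim (hb1 V) hB (perp_eq (hb3 V).symm)
      exact ⟨⟨V, c⟩, Subtype.ext hc.symm⟩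
  rw [← Nat.card_coe_set_eq, ← Nat.card_coe_set_eq, ← card_units, ← Nat.card_prod]
  exact Nat.card_congr (Equiv.ofBijective f hf)

lemma sv_finite (m : ℕ) : (SV F m).Finite := by
  have hch : ∀ V : SV F m, ∃ B, Prim B ∧ Ht B m ∧ V.1 = perp B := fun V => twoDim_iff.1 V.2
  choose b hb1 hb2 hb3 using hch
  have : Finite (SP (WT (F := F)) m) := (sp_finite _ m).to_subtype
  have : Finite (SV F m) := Finite.of_injective
    (fun V => (⟨b V, trivial, hb1 V, hb2 V⟩ : SP (WT (F := F)) m)) (by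
      intro V V' h
      have h : b V = b V' := congrArg Subtype.val h
      apply Subtype.ext
      rw [hb3, hb3 V', h])
  exact Set.toFinite _

lemma svl_card {m l N : ℕ} (hl : 2 * l < m)
    (hN : ∀ A ∈ SP (WT (F := F)) l, (SP (WA A) m).ncard = N) :
    (SVL F m l).ncard * (Fintype.card F - 1) ^ 2 = (SP (WT (F := F)) l).ncard * N := by
  have hch : ∀ V : SVL F m l, ∃ B, Prim B ∧ Ht B m ∧ V.1 = perp B := fun V => twoDim_iff.1 V.2.1
  choose b hb1 hb2 hb3 using hch
  have hch : ∀ V : SVL F m l, ∃ A, Prim A ∧ Ht A l ∧ ∑ i, A i * b V i = 0 := fun V =>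
    (firstMin_iff (hb1 V) (hb2 V) hl).1 (hb3 V ▸ V.2.2)
  choose a ha1 ha2 ha3 using hch
  let f : SVL F m l × Fˣ × Fˣ → (Σ A : SP (WT (F := F)) l, SP (WA A.1) m) := fun x =>
    ⟨⟨C (x.2.1 : F) • a x.1, trivial, (ha1 x.1).smul_unit x.2.1, (ha2 x.1).smul_unit x.2.1⟩,
      ⟨C (x.2.2 : F) • b x.1, by
        have : ∑ i, (C (x.2.1 : F) • a x.1) i * (C (x.2.2 : F) • b x.1) i =
            C (x.2.1 : F) * C (x.2.2 : F) * ∑ i, a x.1 i * b x.1 i := by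
          rw [Finset.mul_sum]
          refine Finset.sum_congr rfl fun i _ => ?_
          simp only [Pi.smul_apply, smul_eq_mul]
          ring
        rw [WA, this, ha3, mul_zero], (hb1 x.1).smul_unit x.2.2, (hb2 x.1).smul_unit x.2.2⟩⟩
  have hf : Function.Bijective f := by
    constructor
    · rintro ⟨V, c, d⟩ ⟨V', c', d'⟩ h
      have h1 : C (c : F) • a V = C (c' : F) • a V' := congrArg (fun z => z.1.1) h
      have h2 : C (d : F) • b V = C (d' : F) • b V' := congrArg (fun z => z.2.1) h
      have hV : V = V' := by
        apply Subtype.ext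
        rw [hb3, hb3 V', ← perp_smul _ d, h2, perp_smul]
      subst hV
      rw [smul_inj (ha1 V).ne_zero h1, smul_inj (hb1 V).ne_zero h2]
    · rintro ⟨⟨A, hA0, hA, hAl⟩, ⟨B, hAB, hB, hm⟩⟩
      let V : SVL F m l := ⟨perp B, twoDim_iff.2 ⟨B, hB, hm, rfl⟩,
        (firstMin_iff hB hm hl).2 ⟨A, hA, hAl, hAB⟩⟩
      obtain ⟨d, hd⟩ := parallel_prim (hb1 V) hB (perp_eq (hb3 V).symm)
      have hAb : ∑ i, A i * b V i = 0 := by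
        rw [← poly_mem_perp, ← hb3 V]
        exact poly_mem_perp.2 hAB
      obtain ⟨c, hc⟩ := parallel_prim (ha1 V) hA (cross_zero (hb1 V) (hb2 V) (ha2 V).degree_le
        hAl.degree_le (ha3 V) hAb (by omega))
      refine ⟨⟨V, c, d⟩, ?_⟩
      have e : ∀ (A₁ A₂ B₁ B₂ : Fin 3 → F[X]) (h1 : A₁ = A₂) (h2 : B₁ = B₂)
          (ha : A₁ ∈ SP (WT (F := F)) l) (hb : B₁ ∈ SP (WA A₁) m)
          (ha' : A₂ ∈ SP (WT (F := F)) l) (hb' : B₂ ∈ SP (WA A₂) m),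
          (⟨⟨A₁, ha⟩, ⟨B₁, hb⟩⟩ : Σ A : SP (WT (F := F)) l, SP (WA A.1) m) =
            ⟨⟨A₂, ha'⟩, ⟨B₂, hb'⟩⟩ := by
        rintro A₁ _ B₁ _ rfl rfl _ _ _ _
        rfl
      exact e _ _ _ _ hc.symm hd.symm _ _ _ _
  have hfin1 : Finite (SP (WT (F := F)) l) := (sp_finite _ l).to_subtype
  have hfin2 : ∀ A : SP (WT (F := F)) l, Finite (SP (WA A.1) m) :=
    fun A => (sp_finite _ m).to_subtype
  have := Fintype.ofFinite (SP (WT (F := F)) l)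
  have key := Nat.card_congr (Equiv.ofBijective f hf)
  rw [Nat.card_prod, Nat.card_prod, card_units, Nat.card_sigma] at key
  rw [Nat.card_coe_set_eq, Finset.sum_congr rfl (fun A _ => (Nat.card_coe_set_eq _).trans (hN A.1 A.2)), Finset.sum_const, Finset.card_univ,
    ← Nat.card_eq_fintype_card (α := SP (WT (F := F)) l), Nat.card_coe_set_eq] at key
  rw [pow_two, key, smul_eq_mul]

end subspaces

section numbers

variable [Fintype F]

lemma sp_WT_zero : ((SP (WT (F := F)) 0).ncard : ℚ) = (Fintype.card F : ℚ) ^ 3 - 1 := by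
  have h := se_card (WT (F := F)) 0
  rw [sp_zero _ WT_smul, slt_WT_card, slt_WT_card] at h
  have h : (((SP (WT (F := F)) 0).ncard + Fintype.card F ^ (3 * 0) : ℕ) : ℚ) =
    (Fintype.card F ^ (3 * (0 + 1)) : ℕ) := by rw [h]
  push_cast at h
  linear_combination h

lemma se_WT (n : ℕ) : ((SE (WT (F := F)) n).ncard : ℚ) =
    (Fintype.card F : ℚ) ^ (3 * n) * ((Fintype.card F : ℚ) ^ 3 - 1) := by
  have h := se_card (WT (F := F)) n
  rw [slt_WT_card, slt_WT_card] at h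
  have h : (((SE (WT (F := F)) n).ncard + Fintype.card F ^ (3 * n) : ℕ) : ℚ) =
    (Fintype.card F ^ (3 * (n + 1)) : ℕ) := by rw [h]
  push_cast at h
  rw [mul_add, pow_add] at h
  linear_combination h

lemma sp_WT_succ (n : ℕ) : ((SP (WT (F := F)) (n + 1)).ncard : ℚ) =
    (Fintype.card F : ℚ) ^ (3 * n) * ((Fintype.card F : ℚ) ^ 3 - 1) *
      ((Fintype.card F : ℚ) ^ 3 - Fintype.card F) := by
  have h := sp_succ (WT (F := F)) WT_smul n
  have h : ((SE (WT (F := F)) (n + 1)).ncard : ℚ) =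
    ((SP (WT (F := F)) (n + 1)).ncard + Fintype.card F * (SE (WT (F := F)) n).ncard : ℕ) := by
    rw [h]
  push_cast at h
  rw [se_WT, se_WT, mul_add, pow_add] at h
  linear_combination -h

lemma slt_WA {A : Fin 3 → F[X]} {l n : ℕ} (hA : Prim A) (hl : Ht A l) (hn : l ≤ n) :
    ((SLT (WA A) n).ncard : ℚ) * (Fintype.card F : ℚ) ^ l = (Fintype.card F : ℚ) ^ (2 * n) := by
  have h := slt_WA_card hA hl hn
  have h : (((SLT (WA A) n).ncard * Fintype.card F ^ (n + l) : ℕ) : ℚ) =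
    (Fintype.card F ^ (3 * n) : ℕ) := by rw [h]
  push_cast at h
  have hq : (Fintype.card F : ℚ) ^ n ≠ 0 := pow_ne_zero _ (by simp)
  apply mul_right_cancel₀ hq
  rw [← pow_add, show 2 * n + n = 3 * n by ring, ← h, pow_add]
  ring

lemma se_WA {A : Fin 3 → F[X]} {l n : ℕ} (hA : Prim A) (hl : Ht A l) (hn : l ≤ n) :
    ((SE (WA A) n).ncard : ℚ) * (Fintype.card F : ℚ) ^ l =
      (Fintype.card F : ℚ) ^ (2 * n) * ((Fintype.card F : ℚ) ^ 2 - 1) := by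
  have h := se_card (WA A) n
  have h : (((SE (WA A) n).ncard + (SLT (WA A) n).ncard : ℕ) : ℚ) =
    (SLT (WA A) (n + 1)).ncard := by rw [h]
  push_cast at h
  have h1 := slt_WA hA hl hn
  have h2 := slt_WA (n := n + 1) hA hl (by omega)
  rw [mul_add, pow_add] at h2
  linear_combination (Fintype.card F : ℚ) ^ l * h - h1 + h2

lemma sp_WA {A : Fin 3 → F[X]} {l n : ℕ} (hA : Prim A) (hl : Ht A l) (hn : l ≤ n) :
    ((SP (WA A) (n + 1)).ncard : ℚ) * (Fintype.card F : ℚ) ^ l =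
      (Fintype.card F : ℚ) ^ (2 * n) * ((Fintype.card F : ℚ) ^ 2 - 1) *
        ((Fintype.card F : ℚ) ^ 2 - (Fintype.card F : ℚ)) := by
  have h := sp_succ (WA A) (WA_smul A) n
  have h : ((SE (WA A) (n + 1)).ncard : ℚ) =
    ((SP (WA A) (n + 1)).ncard + Fintype.card F * (SE (WA A) n).ncard : ℕ) := by
    rw [h]
  push_cast at h
  have h1 := se_WA hA hl hn
  have h2 := se_WA (n := n + 1) hA hl (by omega)
  rw [mul_add, pow_add] at h2
  linear_combination -(Fintype.card F : ℚ) ^ l * h - Fintype.card F * h1 + h2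

end numbers

section final

variable [Fintype F]

lemma one_lt_q : (1 : ℚ) < (Fintype.card F : ℚ) := by
  exact_mod_cast Fintype.one_lt_card (α := F)

lemma sv_val (n : ℕ) : ((SV F (n + 1)).ncard : ℚ) * ((Fintype.card F : ℚ) - 1) =
    (Fintype.card F : ℚ) ^ (3 * n) * ((Fintype.card F : ℚ) ^ 3 - 1) *
      ((Fintype.card F : ℚ) ^ 3 - Fintype.card F) := by
  rw [← sp_WT_succ, ← sv_card]
  push_cast [Nat.cast_sub (Fintype.one_lt_card (α := F)).le]
  rfl

lemma svl_val {n l : ℕ} (hl : 2 * l < n + 1) :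
    ((SVL F (n + 1) l).ncard : ℚ) * ((Fintype.card F : ℚ) - 1) ^ 2 * (Fintype.card F : ℚ) ^ l =
      ((SP (WT (F := F)) l).ncard : ℚ) * ((Fintype.card F : ℚ) ^ (2 * n) *
        ((Fintype.card F : ℚ) ^ 2 - 1) * ((Fintype.card F : ℚ) ^ 2 - (Fintype.card F : ℚ))) := by
  have hq := one_lt_q (F := F)
  have hq0 : (Fintype.card F : ℚ) ^ l ≠ 0 := pow_ne_zero _ (by linarith)
  have key : ∀ N : ℕ, (∀ A ∈ SP (WT (F := F)) l, (SP (WA A) (n + 1)).ncard = N) →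
      ((SVL F (n + 1) l).ncard : ℚ) * ((Fintype.card F : ℚ) - 1) ^ 2 =
        ((SP (WT (F := F)) l).ncard : ℚ) * N := by
    intro N hN
    have h := svl_card hl hN
    rw [← Nat.cast_mul, ← h]
    push_cast [Nat.cast_sub (Fintype.one_lt_card (α := F)).le]
    rfl
  by_cases hne : (SP (WT (F := F)) l).Nonempty
  · obtain ⟨A₀, h0⟩ := hne
    have e0 := sp_WA (n := n) h0.2.1 h0.2.2 (by omega)
    rw [key (SP (WA A₀) (n + 1)).ncard, mul_assoc, e0]
    intro A hA
    have e := sp_WA (n := n) hA.2.1 hA.2.2 (by omega)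
    rw [← e0] at e
    exact_mod_cast mul_right_cancel₀ hq0 e
  · rw [Set.not_nonempty_iff_eq_empty] at hne
    rw [key 0 (by simp [hne])]
    simp [hne]

lemma svl_zero (n : ℕ) :
    ((SVL F (n + 1) 0).ncard : ℚ) * (Fintype.card F : ℚ) ^ n = ((SV F (n + 1)).ncard : ℚ) := by
  have hq := one_lt_q (F := F)
  have h1 := svl_val (F := F) (n := n) (l := 0) (by omega)
  have h2 := sv_val (F := F) n
  rw [sp_WT_zero] at h1
  have h3 : ((Fintype.card F : ℚ) - 1) ^ 2 ≠ 0 := pow_ne_zero _ (by linarith)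
  apply mul_right_cancel₀ h3
  rw [mul_comm 3, pow_mul] at h2
  rw [mul_comm 2, pow_mul] at h1
  generalize (Fintype.card F : ℚ) = q at *
  linear_combination q ^ n * h1 - (q - 1) * h2

lemma svl_succ {n k : ℕ} (hk : 2 * (k + 1) < n + 1) :
    ((SVL F (n + 1) (k + 1)).ncard : ℚ) * (Fintype.card F : ℚ) ^ n =
      (Fintype.card F : ℚ) ^ (2 * k) * ((Fintype.card F : ℚ) ^ 2 - 1) *
        ((SV F (n + 1)).ncard : ℚ) := by
  have hq := one_lt_q (F := F)
  have h1 := svl_val (F := F) hk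
  have h2 := sv_val (F := F) n
  rw [sp_WT_succ] at h1
  have h3 : ((Fintype.card F : ℚ) - 1) ^ 2 * (Fintype.card F : ℚ) ^ (k + 1) ≠ 0 :=
    mul_ne_zero (pow_ne_zero _ (by linarith)) (pow_ne_zero _ (by linarith))
  apply mul_right_cancel₀ h3
  rw [mul_comm 3, pow_mul] at h2
  rw [mul_comm 2 n, pow_mul _ n, mul_comm 3 k, pow_mul _ k] at h1
  rw [mul_comm 2, pow_mul]
  generalize (Fintype.card F : ℚ) = q at *
  rw [pow_succ] at h1 ⊢
  linear_combination q ^ n * h1 - (q ^ k) ^ 3 * q * (q ^ 2 - 1) * (q - 1) * h2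

lemma sv_sum (j : ℕ) :
    (SV F (2 * j)).ncard = ∑ l ∈ Finset.range (j + 1), (SVL F (2 * j) l).ncard := by
  have hfin : ∀ l, Finite (SVL F (2 * j) l) := fun l =>
    ((sv_finite (2 * j)).subset (fun V hV => hV.1)).to_subtype
  let f : (Σ l : Fin (j + 1), SVL F (2 * j) l) → SV F (2 * j) := fun x => ⟨x.2.1, x.2.2.1⟩
  have hf : Function.Bijective f := by
    constructor
    · rintro ⟨l, V, hV⟩ ⟨l', V', hV'⟩ h
      have h : V = V' := congrArg Subtype.val h
      subst h
      have : l = l' := Fin.ext (IsLeast.unique hV.2 hV'.2)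
      subst this
      rfl
    · rintro ⟨V, hV⟩
      obtain ⟨B, hB, hm, hVB⟩ := twoDim_iff.1 hV
      obtain ⟨l, hl, h⟩ := exists_min hm
      exact ⟨⟨⟨l, by omega⟩, V, hV, hVB ▸ h⟩, rfl⟩
  rw [← Nat.card_coe_set_eq, ← Nat.card_congr (Equiv.ofBijective f hf), Nat.card_sigma,
    Finset.sum_range]
  simp only [Nat.card_coe_set_eq]

lemma partial_sum {n k : ℕ} (hk : 2 * k < n + 1) :
    (∑ l ∈ Finset.range (k + 1), ((SVL F (n + 1) l).ncard : ℚ)) * (Fintype.card F : ℚ) ^ n =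
      (Fintype.card F : ℚ) ^ (2 * k) * ((SV F (n + 1)).ncard : ℚ) := by
  induction k with
  | zero => simp [svl_zero]
  | succ k ih =>
    rw [Finset.sum_range_succ, add_mul, ih (by omega), svl_succ hk, mul_add, pow_add]
    ring

end final

end PFM

/-- Among two-dimensional subspaces `V ⊂ 𝔽_q(X)³` of height `2j`, the proportion with
`μ₁(V) = j - a` equals `0` if `a > j`, `q^{-2a+1}` if `a = j`, `q^{-2a}(q - q⁻¹)` if
`0 < a < j`, and `q^{-2a}(1 - q⁻¹)` if `a = 0`. -/
theorem proportion_first_minimum {F : Type*} [Field F] [Fintype F] (q j a : ℕ)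
    (hq : Fintype.card F = q) (hj : 1 ≤ j) :
    (Nat.card {V : Submodule (RatFunc F) (Fin 3 → RatFunc F) //
        TwoDimOfHeight V (2 * j) ∧
        ∃ μ : ℕ, FirstMinimum V μ ∧ (μ : ℤ) = (j : ℤ) - (a : ℤ)} : ℚ) =
      (if j < a then 0
       else if a = j then (q : ℚ) ^ (1 - 2 * (a : ℤ))
       else if 0 < a then (q : ℚ) ^ (-2 * (a : ℤ)) * ((q : ℚ) - (q : ℚ)⁻¹)
       else (q : ℚ) ^ (-2 * (a : ℤ)) * (1 - (q : ℚ)⁻¹)) *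
      (Nat.card {V : Submodule (RatFunc F) (Fin 3 → RatFunc F) //
        TwoDimOfHeight V (2 * j)} : ℚ) := by
  subst hq
  have hq := PFM.one_lt_q (F := F)
  have hq0 : (Fintype.card F : ℚ) ≠ 0 := by linarith
  obtain ⟨i, rfl⟩ : ∃ i, j = i + 1 := ⟨j - 1, by omega⟩
  have hS : Nat.card {V : Submodule (RatFunc F) (Fin 3 → RatFunc F) //
      TwoDimOfHeight V (2 * (i + 1))} = (PFM.SV F (2 * i + 1 + 1)).ncard := by
    rw [← Nat.card_coe_set_eq]; rfl
  rw [hS]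
  by_cases hja : i + 1 < a
  · rw [if_pos hja, zero_mul, Nat.cast_eq_zero]
    have : IsEmpty {V : Submodule (RatFunc F) (Fin 3 → RatFunc F) //
        TwoDimOfHeight V (2 * (i + 1)) ∧
        ∃ μ : ℕ, FirstMinimum V μ ∧ (μ : ℤ) = ((i + 1 : ℕ) : ℤ) - (a : ℤ)} := by
      constructor
      rintro ⟨V, -, μ, -, h⟩
      omega
    exact Nat.card_of_isEmpty
  obtain ⟨l, hl⟩ : ∃ l, i + 1 = l + a := ⟨i + 1 - a, by omega⟩
  have hSL : Nat.card {V : Submodule (RatFunc F) (Fin 3 → RatFunc F) //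
      TwoDimOfHeight V (2 * (i + 1)) ∧
        ∃ μ : ℕ, FirstMinimum V μ ∧ (μ : ℤ) = ((i + 1 : ℕ) : ℤ) - (a : ℤ)} =
      (PFM.SVL F (2 * i + 1 + 1) l).ncard := by
    rw [← Nat.card_coe_set_eq]
    refine Nat.card_congr (Equiv.subtypeEquivRight fun V => ?_)
    constructor
    · rintro ⟨h1, μ, h2, h3⟩
      have : μ = l := by omega
      exact ⟨h1, this ▸ h2⟩
    · rintro ⟨h1, h2⟩
      exact ⟨h1, l, h2, by omega⟩
  rw [hSL, if_neg hja]
  apply mul_right_cancel₀ (pow_ne_zero (2 * i + 1) hq0)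
  by_cases haj : a = i + 1
  · rw [if_pos haj]
    have : l = 0 := by omega
    subst this
    rw [PFM.svl_zero, mul_right_comm, ← zpow_natCast, ← zpow_add₀ hq0]
    have : 1 - 2 * (a : ℤ) + ((2 * i + 1 : ℕ) : ℤ) = 0 := by
      subst haj; push_cast; ring
    rw [this, zpow_zero, one_mul]
  rw [if_neg haj]
  by_cases ha : 0 < a
  · rw [if_pos ha]
    obtain ⟨k, rfl⟩ : ∃ k, l = k + 1 := ⟨l - 1, by omega⟩
    rw [PFM.svl_succ (by omega)]
    have e1 : (Fintype.card F : ℚ) ^ (-2 * (a : ℤ)) * (Fintype.card F : ℚ) ^ (2 * i + 1) =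
        (Fintype.card F : ℚ) ^ (2 * k) * Fintype.card F := by
      rw [← zpow_natCast, ← zpow_add₀ hq0, ← pow_succ, ← zpow_natCast]
      congr 1
      push_cast
      omega
    have e2 : (Fintype.card F : ℚ) * (Fintype.card F : ℚ)⁻¹ = 1 := mul_inv_cancel₀ hq0
    generalize (Fintype.card F : ℚ) = q at *
    linear_combination (-(q - q⁻¹) * ((PFM.SV F (2 * i + 1 + 1)).ncard : ℚ)) * e1
      + (q ^ (2 * k) * ((PFM.SV F (2 * i + 1 + 1)).ncard : ℚ)) * e2
  · rw [if_neg ha]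
    have ha0 : a = 0 := by omega
    subst ha0
    have hl' : l = i + 1 := by omega
    subst hl'
    have h1 := PFM.sv_sum (F := F) (i + 1)
    have h2 := PFM.partial_sum (F := F) (n := 2 * i + 1) (k := i) (by omega)
    rw [Finset.sum_range_succ, show 2 * (i + 1) = 2 * i + 1 + 1 by ring] at h1
    have h1' : ((PFM.SV F (2 * i + 1 + 1)).ncard : ℚ) =
        ∑ l ∈ Finset.range (i + 1), ((PFM.SVL F (2 * i + 1 + 1) l).ncard : ℚ) +
          ((PFM.SVL F (2 * i + 1 + 1) (i + 1)).ncard : ℚ) := by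
      exact_mod_cast h1
    have e2 : (Fintype.card F : ℚ) * (Fintype.card F : ℚ)⁻¹ = 1 := mul_inv_cancel₀ hq0
    simp only [Nat.cast_zero, mul_zero, zpow_zero, one_mul]
    generalize (Fintype.card F : ℚ) = q at *
    generalize ((PFM.SV F (2 * i + 1 + 1)).ncard : ℚ) = S at *
    rw [pow_succ] at h2 ⊢
    linear_combination (-(q ^ (2 * i) * q)) * h1' - h2 + (q ^ (2 * i) * S) * e2
end

section
/- Let q be a power of 3, g ≥ 0, ε ∈ {1,2}, and suppose g ≡ 0 mod 3 with g ≥ 3 (cases ε = 1 and ε = 2), or g ≡ 2 mod 3 with ε = 2. Then the proportion μ_{ε,g}(a) of monic cubefree f ∈ F_q[X] of degree 2g+ε for which the associated a-number equals a is: 1 - q^{-1} if a = 0; q^{-2a+1}(1 - q^{-2}) if 0 < a < ⌊(g+1)/3⌋; q^{-2a+1} if a = ⌊(g+1)/3⌋; and 0 if a > ⌊(g+1)/3⌋. -/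
open Polynomial
set_option linter.unusedSectionVars false

namespace ANum

/-- Degrees at most `D`, with the vector of degree `D` coefficients equal to `v`. -/
def Lead {F : Type*} [Field F] (D : ℕ) (v : Fin 3 → F) (c : Fin 3 → F[X]) : Prop :=
  ∀ i, (c i).natDegree ≤ D ∧ (c i).coeff D = v i

/-- The dot product of two vectors of polynomials. -/
noncomputable def dot {F : Type*} [Field F] (Q c : Fin 3 → F[X]) : F[X] := ∑ i, Q i * c i

/-- Primitive vectors. -/
def Prim {F : Type*} [Field F] (c : Fin 3 → F[X]) : Prop := ∃ u, dot u c = 1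

/-- The solution space. -/
def InW {F : Type*} [Field F] (M : ℕ) (c Q : Fin 3 → F[X]) : Prop :=
  (∀ i, (Q i).degree < (M : WithBot ℕ)) ∧ dot Q c = 0

section general

lemma card_rel {α β : Type*} (p : α → β → Prop) (A : α → Prop) (n : ℕ) [Finite {a // A a}]
    (hA : ∀ a b, p a b → A a) (hf : ∀ a, A a → Finite {b // p a b})
    (hn : ∀ a, A a → Nat.card {b // p a b} = n) :
    Nat.card {x : α × β // p x.1 x.2} = Nat.card {a // A a} * n := by
  classical
  have e : {x : α × β // p x.1 x.2} ≃ Σ a : {a // A a}, {b // p a.1 b} :=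
    { toFun := fun x => ⟨⟨x.1.1, hA _ _ x.2⟩, ⟨x.1.2, x.2⟩⟩
      invFun := fun y => ⟨(y.1.1, y.2.1), y.2.2⟩
      left_inv := fun x => rfl
      right_inv := fun y => rfl }
  have := Fintype.ofFinite {a // A a}
  have : ∀ a : {a // A a}, Finite {b // p a.1 b} := fun a => hf _ a.2
  rw [Nat.card_congr e, Nat.card_sigma]
  simp [hn _ (Subtype.prop _)]

lemma card_rel' {α β : Type*} (p : α → β → Prop) (A : β → Prop) (n : ℕ) [Finite {a // A a}]
    (hA : ∀ a b, p a b → A b) (hf : ∀ b, A b → Finite {a // p a b})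
    (hn : ∀ b, A b → Nat.card {a // p a b} = n) :
    Nat.card {x : α × β // p x.1 x.2} = Nat.card {a // A a} * n := by
  rw [← card_rel (fun b a => p a b) A n (fun b a => hA a b) hf hn]
  exact Nat.card_congr ((Equiv.prodComm α β).subtypeEquiv (fun x => Iff.rfl))

end general

variable {F : Type*} [Field F]

lemma dot_smul_left (h : F[X]) (Q c : Fin 3 → F[X]) :
    dot (fun i => h * Q i) c = h * dot Q c := by
  simp only [dot, Finset.mul_sum, mul_assoc]

lemma dot_smul_right (h : F[X]) (Q c : Fin 3 → F[X]) :
    dot Q (fun i => h * c i) = h * dot Q c := by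
  simp only [dot, Finset.mul_sum]
  exact Finset.sum_congr rfl fun i _ => by ring

lemma dot_comm (Q c : Fin 3 → F[X]) : dot Q c = dot c Q := by
  simp only [dot]
  exact Finset.sum_congr rfl fun i _ => by ring

lemma Prim.ne_zero {c : Fin 3 → F[X]} (h : Prim c) : c ≠ 0 := by
  rintro rfl
  obtain ⟨u, hu⟩ := h
  simp [dot] at hu

/-- Every nonzero vector is a monic multiple of a primitive one. -/
lemma exists_prim (c : Fin 3 → F[X]) (hc : c ≠ 0) :
    ∃ h : F[X], h.Monic ∧ ∃ c' : Fin 3 → F[X], Prim c' ∧ c = fun i => h * c' i := by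
  classical
  obtain ⟨d, hd⟩ := (IsPrincipalIdealRing.principal (Ideal.span (Set.range c))).principal
  change Ideal.span (Set.range c) = Ideal.span {d} at hd
  have hdiv : ∀ i, d ∣ c i := fun i => by
    rw [← Ideal.mem_span_singleton, ← hd]
    exact Ideal.subset_span ⟨i, rfl⟩
  have hd0 : d ≠ 0 := by
    rintro rfl
    exact hc (funext fun i => by simpa using hdiv i)
  have hmem : d ∈ Ideal.span (Set.range c) := by
    rw [hd]; exact Ideal.mem_span_singleton_self d
  obtain ⟨u, hu⟩ := (Ideal.mem_span_range_iff_exists_fun).1 hmem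
  have hl : d.leadingCoeff ≠ 0 := leadingCoeff_ne_zero.2 hd0
  choose k hk using hdiv
  refine ⟨d * C d.leadingCoeff⁻¹, monic_mul_leadingCoeff_inv hd0,
    fun i => C d.leadingCoeff * k i, ⟨fun i => C d.leadingCoeff⁻¹ * u i, ?_⟩, ?_⟩
  · apply mul_left_cancel₀ hd0
    have hC : C d.leadingCoeff⁻¹ * C d.leadingCoeff = (1 : F[X]) := by
      rw [← C_mul, inv_mul_cancel₀ hl, C_1]
    rw [mul_one]
    conv_rhs => rw [← hu]
    simp only [dot, Finset.mul_sum]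
    refine Finset.sum_congr rfl fun i _ => ?_
    rw [hk i]
    linear_combination (d * u i * k i) * hC
  · funext i
    have hC : C d.leadingCoeff⁻¹ * C d.leadingCoeff = (1 : F[X]) := by
      rw [← C_mul, inv_mul_cancel₀ hl, C_1]
    rw [hk i]
    linear_combination (-d * k i) * hC

lemma prim_dvd {h h' : F[X]} {c c' : Fin 3 → F[X]} (hc' : Prim c')
    (e : (fun i => h * c i) = fun i => h' * c' i) : h ∣ h' := by
  obtain ⟨u, hu⟩ := hc'
  have : h' = h * dot u c := by
    rw [← dot_smul_right, e, dot_smul_right, hu, mul_one]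
  exact ⟨_, this⟩

lemma lead_mul {h : F[X]} (hm : h.Monic) {D : ℕ} {v : Fin 3 → F} {c : Fin 3 → F[X]} :
    Lead (h.natDegree + D) v (fun i => h * c i) ↔ Lead D v c := by
  refine forall_congr' fun i => ?_
  have h1 : (h * c i).natDegree ≤ h.natDegree + D ↔ (c i).natDegree ≤ D := by
    by_cases h0 : c i = 0
    · simp [h0]
    · rw [hm.natDegree_mul' h0]; omega
  rw [h1]
  refine and_congr_right fun h2 => ?_
  change (h * c i).coeff _ = _ ↔ _
  rw [coeff_mul_add_eq_of_natDegree_le le_rfl h2, hm.coeff_natDegree, one_mul]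

lemma Lead.ne_zero {D : ℕ} {v : Fin 3 → F} {c : Fin 3 → F[X]} (h : Lead D v c) (hv : v ≠ 0) :
    c ≠ 0 := by
  rintro rfl
  exact hv (funext fun i => by simpa using (h i).2.symm)

section count
variable [Fintype F]

lemma finite_degreeLT (n : ℕ) : Finite (degreeLT F n) :=
  Finite.of_equiv _ (degreeLTEquiv F n).symm.toEquiv

lemma card_degreeLT (n : ℕ) : Nat.card (degreeLT F n) = Fintype.card F ^ n := by
  rw [Nat.card_congr (degreeLTEquiv F n).toEquiv]
  simp [Nat.card_eq_fintype_card]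

lemma card_monic (n : ℕ) :
    Nat.card {p : F[X] // p.Monic ∧ p.natDegree = n} = Fintype.card F ^ n := by
  rw [Nat.card_congr (monicEquivDegreeLT n), card_degreeLT]

lemma finite_monic (n : ℕ) : Finite {p : F[X] // p.Monic ∧ p.natDegree = n} :=
  have := finite_degreeLT (F := F) n
  Finite.of_equiv _ (monicEquivDegreeLT n).symm

lemma sub_lead_mem {D : ℕ} {x : F} {p : F[X]} (hp : p.natDegree ≤ D ∧ p.coeff D = x) :
    (p - C x * X ^ D).degree < (D : WithBot ℕ) := by
  rw [degree_lt_iff_coeff_zero]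
  intro m hm
  rcases Nat.eq_or_lt_of_le hm with rfl | h
  · simp [hp.2]
  · rw [coeff_sub, coeff_eq_zero_of_natDegree_lt (lt_of_le_of_lt hp.1 h)]
    simp [coeff_X_pow, h.ne']

lemma add_lead {D : ℕ} (x : F) {p : F[X]} (hp : p.degree < (D : WithBot ℕ)) :
    (p + C x * X ^ D).natDegree ≤ D ∧ (p + C x * X ^ D).coeff D = x := by
  constructor
  · exact natDegree_add_le_of_degree_le (natDegree_le_of_degree_le hp.le) (natDegree_C_mul_X_pow_le _ _)
  · rw [coeff_add, coeff_eq_zero_of_degree_lt hp]; simp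

/-- vectors with given leading vector are a translate of the lower degree ones -/
noncomputable def leadEquiv (D : ℕ) (v : Fin 3 → F) :
    {c : Fin 3 → F[X] // Lead D v c} ≃ (Fin 3 → degreeLT F D) where
  toFun c i := ⟨c.1 i - C (v i) * X ^ D, mem_degreeLT.2 (sub_lead_mem (c.2 i))⟩
  invFun d := ⟨fun i => (d i : F[X]) + C (v i) * X ^ D,
    fun i => add_lead (v i) (mem_degreeLT.1 (d i).2)⟩
  left_inv c := by ext1; funext i; simp
  right_inv d := by funext i; ext1; simp

lemma finite_lead (D : ℕ) (v : Fin 3 → F) : Finite {c : Fin 3 → F[X] // Lead D v c} :=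
  have := finite_degreeLT (F := F) D
  Finite.of_equiv _ (leadEquiv D v).symm

lemma card_lead (D : ℕ) (v : Fin 3 → F) :
    Nat.card {c : Fin 3 → F[X] // Lead D v c} = Fintype.card F ^ (3 * D) := by
  rw [Nat.card_congr (leadEquiv D v), Nat.card_pi]
  simp [card_degreeLT, ← pow_mul, mul_comm]

lemma finite_of_imp {α : Type*} {p r : α → Prop} (h : ∀ a, p a → r a) [Finite {a // r a}] :
    Finite {a // p a} :=
  Finite.of_injective (fun x : {a // p a} => (⟨x.1, h _ x.2⟩ : {a // r a}))
    (fun x y hxy => Subtype.ext (by simpa using hxy))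

end count

end ANum
set_option linter.unusedSectionVars false
set_option linter.unusedSimpArgs false
namespace ANum
variable {F : Type*} [Field F] [Fintype F]

/-- number of all vectors orthogonal to `Q` -/
noncomputable def T (Q : Fin 3 → F[X]) (v : Fin 3 → F) (D : ℕ) : ℕ :=
  Nat.card {c : Fin 3 → F[X] // Lead D v c ∧ dot Q c = 0}

/-- number of primitive vectors orthogonal to `Q` -/
noncomputable def P (Q : Fin 3 → F[X]) (v : Fin 3 → F) (D : ℕ) : ℕ :=
  Nat.card {c : Fin 3 → F[X] // Lead D v c ∧ Prim c ∧ dot Q c = 0}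

lemma T_eq_sum (Q : Fin 3 → F[X]) (v : Fin 3 → F) (hv : v ≠ 0) (D : ℕ) :
    T Q v D = ∑ k ∈ Finset.range (D + 1), Fintype.card F ^ k * P Q v (D - k) := by
  classical
  let S : Type _ := Σ k : Fin (D + 1), {h : F[X] // h.Monic ∧ h.natDegree = k} ×
    {c : Fin 3 → F[X] // Lead (D - k) v c ∧ Prim c ∧ dot Q c = 0}
  let φ : S → {c : Fin 3 → F[X] // Lead D v c ∧ dot Q c = 0} := fun s =>
    ⟨fun i => s.2.1.1 * s.2.2.1 i, by
      obtain ⟨k, ⟨h, hm, hk⟩, ⟨c, hc, hp, hd⟩⟩ := s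
      refine ⟨?_, ?_⟩
      · have := (lead_mul (v := v) (c := c) hm (D := D - k)).2 hc
        rwa [hk, Nat.add_sub_cancel' (Nat.lt_succ_iff.1 k.2)] at this
      · simp only [dot_smul_right, hd, mul_zero]⟩
  have hφ : Function.Bijective φ := by
    constructor
    · rintro ⟨k, ⟨h, hm, hk⟩, ⟨c, hc, hp, hd⟩⟩ ⟨k', ⟨h', hm', hk'⟩, ⟨c', hc', hp', hd'⟩⟩ he
      have he1 : (fun i => h * c i) = fun i => h' * c' i := congrArg Subtype.val he
      have hh : h = h' := eq_of_monic_of_associated hm hm'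
        (associated_of_dvd_dvd (prim_dvd hp' he1) (prim_dvd hp he1.symm))
      subst hh
      have hkk : k = k' := Fin.ext (hk.symm.trans hk')
      subst hkk
      have hcc : c = c' := funext fun i => mul_left_cancel₀ hm.ne_zero (congrFun he1 i)
      subst hcc
      rfl
    · rintro ⟨c, hc, hd⟩
      obtain ⟨h, hm, c', hp, rfl⟩ := exists_prim c (hc.ne_zero hv)
      have hk : h.natDegree ≤ D := by
        obtain ⟨i, hi⟩ := Function.ne_iff.1 hv
        have h1 := (hc i).2
        have h2 := (hc i).1
        have : c' i ≠ 0 := by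
          intro h0
          apply hi
          rw [← h1]; simp [h0]
        rw [hm.natDegree_mul' this] at h2
        omega
      refine ⟨⟨⟨h.natDegree, Nat.lt_succ_of_le hk⟩, ⟨h, hm, rfl⟩, ⟨c', ?_, hp, ?_⟩⟩, rfl⟩
      · rw [← lead_mul hm]
        simpa only [Nat.add_sub_cancel' hk] using hc
      · rw [dot_smul_right] at hd
        exact (mul_eq_zero.1 hd).resolve_left hm.ne_zero
  have hfin : ∀ k : Fin (D + 1), Finite ({h : F[X] // h.Monic ∧ h.natDegree = k} ×
    {c : Fin 3 → F[X] // Lead (D - k) v c ∧ Prim c ∧ dot Q c = 0}) := fun k => by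
    have := finite_monic (F := F) k
    have := finite_lead (D - k) v
    have : Finite {c : Fin 3 → F[X] // Lead (D - k) v c ∧ Prim c ∧ dot Q c = 0} :=
      finite_of_imp (r := Lead (D - k) v) fun c h => h.1
    infer_instance
  rw [T, ← Nat.card_congr (Equiv.ofBijective φ hφ), Nat.card_sigma, Finset.sum_range]
  refine Finset.sum_congr rfl fun k _ => ?_
  rw [Nat.card_prod, card_monic]
  rfl

lemma T_succ (Q : Fin 3 → F[X]) (v : Fin 3 → F) (hv : v ≠ 0) (D : ℕ) :
    T Q v (D + 1) = P Q v (D + 1) + Fintype.card F * T Q v D := by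
  rw [T_eq_sum Q v hv, T_eq_sum Q v hv, Finset.sum_range_succ', Finset.mul_sum, add_comm]
  congr 1
  · simp
  · refine Finset.sum_congr rfl fun k _ => ?_
    rw [Nat.add_sub_add_right, pow_succ]; ring

lemma T_zero (Q : Fin 3 → F[X]) (v : Fin 3 → F) (hv : v ≠ 0) : T Q v 0 = P Q v 0 := by
  rw [T_eq_sum Q v hv]; simp

/-- number of primitive vectors with given leading vector -/
lemma card_prim_succ (v : Fin 3 → F) (hv : v ≠ 0) (D : ℕ) :
    Nat.card {c : Fin 3 → F[X] // Lead (D + 1) v c ∧ Prim c} + Fintype.card F ^ (3 * D + 1)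
      = Fintype.card F ^ (3 * D + 3) := by
  have h := T_succ 0 v hv D
  have h0 : ∀ D, T 0 v D = Fintype.card F ^ (3 * D) := fun D => by
    rw [← card_lead D v, T]; simp [dot]
  have h1 : P 0 v (D + 1) = Nat.card {c : Fin 3 → F[X] // Lead (D + 1) v c ∧ Prim c} := by
    rw [P]; simp [dot]
  rw [← h1, pow_succ', ← h0, ← h, h0]; rfl

lemma card_prim_zero (v : Fin 3 → F) (hv : v ≠ 0) :
    Nat.card {c : Fin 3 → F[X] // Lead 0 v c ∧ Prim c} = 1 := by
  have h := T_zero 0 v hv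
  have h0 : T 0 v 0 = Fintype.card F ^ (3 * 0) := by
    rw [← card_lead 0 v, T]; simp [dot]
  have h1 : P 0 v 0 = Nat.card {c : Fin 3 → F[X] // Lead 0 v c ∧ Prim c} := by
    rw [P]; simp [dot]
  rw [← h1, ← h, h0]; rfl

lemma dot_degree_lt {D e : ℕ} {Q c : Fin 3 → F[X]} (hQ : ∀ i, (Q i).natDegree ≤ e)
    (hc : ∀ i, (c i).degree < (D : WithBot ℕ)) : (dot Q c).degree < ((D + e : ℕ) : WithBot ℕ) := by
  rw [← mem_degreeLT]
  refine Submodule.sum_mem _ fun i _ => mem_degreeLT.2 ?_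
  by_cases h0 : Q i = 0
  · simp [h0, WithBot.bot_lt_coe]
  by_cases h1 : c i = 0
  · simp [h1, WithBot.bot_lt_coe]
  have h2 := hc i
  have h3 := hQ i
  rw [degree_eq_natDegree h1] at h2
  rw [degree_mul, degree_eq_natDegree h0, degree_eq_natDegree h1]
  norm_cast at h2 ⊢
  omega

/-- surjectivity of the dot product -/
lemma exists_dot {D e : ℕ} {Q : Fin 3 → F[X]} {w : Fin 3 → F} (hQ : Lead e w Q) (hw : w ≠ 0)
    (hp : Prim Q) (hD : e ≤ D) (t : F[X]) (ht : t.degree < ((D + e : ℕ) : WithBot ℕ)) :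
    ∃ c : Fin 3 → F[X], (∀ i, (c i).degree < (D : WithBot ℕ)) ∧ dot Q c = t := by
  classical
  obtain ⟨u, hu⟩ := hp
  obtain ⟨j, hj⟩ := Function.ne_iff.1 hw
  have hQj : Q j ≠ 0 := by
    intro h0
    apply hj; rw [← (hQ j).2, h0]; simp
  have hdj : (Q j).natDegree = e := by
    apply le_antisymm (hQ j).1
    apply le_natDegree_of_ne_zero
    rw [(hQ j).2]; exact hj
  let c : Fin 3 → F[X] := Function.update (fun i => (u i * t) % Q j) j
    (u j * t + ∑ i ∈ Finset.univ.erase j, Q i * ((u i * t) / Q j))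
  have hcj : c j = u j * t + ∑ i ∈ Finset.univ.erase j, Q i * ((u i * t) / Q j) := by
    simp [c]
  have hci : ∀ i ≠ j, c i = (u i * t) % Q j := fun i hi => by simp [c, hi]
  have hcdeg : ∀ i ≠ j, (c i).degree < (e : WithBot ℕ) := fun i hi => by
    rw [hci i hi, ← hdj, ← degree_eq_natDegree hQj]
    exact EuclideanDomain.mod_lt _ hQj
  have hdot : dot Q c = t := by
    have h1 : dot Q c = Q j * c j + ∑ i ∈ Finset.univ.erase j, Q i * c i :=
      (Finset.add_sum_erase _ _ (Finset.mem_univ j)).symm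
    have h2 : dot u Q = u j * Q j + ∑ i ∈ Finset.univ.erase j, u i * Q i :=
      (Finset.add_sum_erase _ _ (Finset.mem_univ j)).symm
    have h3 : ∑ i ∈ Finset.univ.erase j, Q i * c i = ∑ i ∈ Finset.univ.erase j, Q i * ((u i * t) % Q j) :=
      Finset.sum_congr rfl fun i hi => by rw [hci i (Finset.ne_of_mem_erase hi)]
    have h4 : ∑ i ∈ Finset.univ.erase j, Q i * ((u i * t) % Q j)
        + Q j * ∑ i ∈ Finset.univ.erase j, Q i * ((u i * t) / Q j)
        = (∑ i ∈ Finset.univ.erase j, u i * Q i) * t := by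
      rw [Finset.mul_sum, ← Finset.sum_add_distrib, Finset.sum_mul]
      refine Finset.sum_congr rfl fun i _ => ?_
      linear_combination (Q i) * (EuclideanDomain.div_add_mod (u i * t) (Q j))
    rw [h1, h3, hcj]
    linear_combination h4 - t * h2 + t * hu
  refine ⟨c, fun i => ?_, hdot⟩
  by_cases hi : i = j
  swap
  · exact lt_of_lt_of_le (hcdeg i hi) (by exact_mod_cast hD)
  subst hi
  by_cases h0 : c i = 0
  · simp [h0, WithBot.bot_lt_coe]
  have h5 : Q i * c i = t - ∑ k ∈ Finset.univ.erase i, Q k * c k := by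
    have h1 : dot Q c = Q i * c i + ∑ k ∈ Finset.univ.erase i, Q k * c k :=
      (Finset.add_sum_erase _ _ (Finset.mem_univ i)).symm
    linear_combination hdot - h1
  have h6 : Q i * c i ∈ degreeLT F (D + e) := by
    rw [h5]
    refine Submodule.sub_mem _ (mem_degreeLT.2 ht) (Submodule.sum_mem _ fun k hk => mem_degreeLT.2 ?_)
    have hk' := Finset.ne_of_mem_erase hk
    by_cases h1 : c k = 0
    · simp [h1, WithBot.bot_lt_coe]
    by_cases h0 : Q k = 0
    · simp [h0, WithBot.bot_lt_coe]
    have h2 := hcdeg k hk'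
    have h3 := (hQ k).1
    rw [degree_eq_natDegree h1] at h2
    rw [degree_mul, degree_eq_natDegree h0, degree_eq_natDegree h1]
    norm_cast at h2 ⊢
    omega
  rw [mem_degreeLT, degree_mul, degree_eq_natDegree hQj, hdj, degree_eq_natDegree h0] at h6
  rw [degree_eq_natDegree h0]
  norm_cast at h6 ⊢
  omega

/-- the dot product as a linear map on bounded degree vectors -/
noncomputable def dotLin (D e : ℕ) (Q : Fin 3 → F[X]) (hQ : ∀ i, (Q i).natDegree ≤ e) :
    (Fin 3 → degreeLT F D) →ₗ[F] degreeLT F (D + e) where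
  toFun c := ⟨dot Q fun i => (c i : F[X]),
    mem_degreeLT.2 (dot_degree_lt hQ fun i => mem_degreeLT.1 (c i).2)⟩
  map_add' c c' := by
    ext1; simp [dot, mul_add, Finset.sum_add_distrib]
  map_smul' a c := by
    ext1; simp [dot, Finset.smul_sum]

lemma dot_coeff {D e : ℕ} {v w : Fin 3 → F} {Q c : Fin 3 → F[X]} (hQ : Lead e w Q)
    (hc : Lead D v c) : (dot Q c).coeff (e + D) = ∑ i, w i * v i := by
  rw [dot, finsetSum_coeff]
  refine Finset.sum_congr rfl fun i _ => ?_
  rw [coeff_mul_add_eq_of_natDegree_le (hQ i).1 (hc i).1, (hQ i).2, (hc i).2]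

lemma card_fiber {V W : Type*} [AddCommGroup V] [AddCommGroup W] [Module F V] [Module F W]
    [Finite V] [Finite W] (φ : V →ₗ[F] W) (hφ : Function.Surjective φ) (y : W) :
    Nat.card {x // φ x = y} * Nat.card W = Nat.card V := by
  have e : ∀ z, Nat.card {x // φ x = z} = Nat.card {x // φ x = y} := fun z => by
    obtain ⟨a, ha⟩ := hφ (z - y)
    refine Nat.card_congr ((Equiv.subRight a).subtypeEquiv fun x => ?_)
    simp only [Equiv.subRight_apply, map_sub, ha]
    rw [sub_eq_iff_eq_add, add_sub_cancel]
  have h := card_rel' (fun x y => φ x = y) (fun _ => True) _ (fun _ _ _ => trivial)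
    (fun _ _ => inferInstance) (fun z _ => e z)
  have h2 := card_rel (fun x y => φ x = y) (fun _ => True) 1 (fun _ _ _ => trivial)
    (fun _ _ => inferInstance) (fun x _ => by simp)
  rw [h2, mul_one, Nat.card_congr (Equiv.subtypeUnivEquiv fun _ => trivial),
    Nat.card_congr (Equiv.subtypeUnivEquiv fun _ => trivial)] at h
  rw [h, mul_comm]

lemma T_eq {D e : ℕ} {Q : Fin 3 → F[X]} {v w : Fin 3 → F} (hQ : Lead e w Q) (hw : w ≠ 0)
    (hp : Prim Q) (hD : e ≤ D) (hvw : ∑ i, w i * v i = 0) :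
    T Q v D = Fintype.card F ^ (2 * D - e) := by
  have hX : Lead D v (fun i => C (v i) * X ^ D) := fun i => by
    simpa using add_lead (v i) (p := 0) (D := D) (by simp [WithBot.bot_lt_coe])
  have hdeg : (dot Q (fun i => C (v i) * X ^ D)).degree < ((D + e : ℕ) : WithBot ℕ) := by
    rw [degree_lt_iff_coeff_zero]
    intro m hm
    rcases Nat.eq_or_lt_of_le hm with rfl | h
    · rw [add_comm, dot_coeff hQ hX, hvw]
    · apply coeff_eq_zero_of_natDegree_lt
      refine lt_of_le_of_lt ?_ h
      refine natDegree_sum_le_of_forall_le _ _ fun i _ => ?_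
      refine natDegree_mul_le.trans ?_
      have := (hQ i).1
      have := (hX i).1
      omega
  have hs : Function.Surjective (dotLin D e Q fun i => (hQ i).1) := by
    rintro ⟨t, ht⟩
    obtain ⟨c, hc, h⟩ := exists_dot hQ hw hp hD t (mem_degreeLT.1 ht)
    exact ⟨fun i => ⟨c i, mem_degreeLT.2 (hc i)⟩, Subtype.ext h⟩
  have := finite_degreeLT (F := F) D
  have := finite_degreeLT (F := F) (D + e)
  have h := card_fiber (dotLin D e Q fun i => (hQ i).1) hs (-⟨_, mem_degreeLT.2 hdeg⟩)
  have hT : T Q v D = Nat.card {x // dotLin D e Q (fun i => (hQ i).1) x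
      = (-⟨_, mem_degreeLT.2 hdeg⟩ : degreeLT F (D + e))} := by
    refine Nat.card_congr ((Equiv.subtypeSubtypeEquivSubtypeInter _ _).symm.trans
      ((leadEquiv D v).subtypeEquiv fun c => ?_))
    rw [Subtype.ext_iff]
    simp only [dotLin, leadEquiv, dot, LinearMap.coe_mk, AddHom.coe_mk, Equiv.coe_fn_mk,
      mul_sub, Finset.sum_sub_distrib, NegMemClass.coe_neg]
    constructor
    · intro h; rw [h]; simp
    · intro h; linear_combination h
  rw [← hT, card_degreeLT, Nat.card_pi] at h
  simp only [card_degreeLT, Finset.prod_const, Finset.card_univ, Fintype.card_fin, ← pow_mul] at h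
  have hq : 0 < Fintype.card F := Fintype.card_pos
  apply Nat.eq_of_mul_eq_mul_right (pow_pos hq (D + e))
  rw [h, ← pow_add]
  congr 1; omega

lemma P_eq {D e : ℕ} {Q : Fin 3 → F[X]} {v w : Fin 3 → F} (hQ : Lead e w Q) (hw : w ≠ 0)
    (hv : v ≠ 0) (hp : Prim Q) (hD : e ≤ D) (hvw : ∑ i, w i * v i = 0) :
    P Q v (D + 1) + Fintype.card F ^ (2 * D - e + 1) = Fintype.card F ^ (2 * D - e + 2) := by
  have h := T_succ Q v hv D
  rw [T_eq hQ hw hp hD hvw, T_eq hQ hw hp (by omega) hvw] at h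
  rw [pow_succ', ← h]
  congr 1; omega

end ANum
set_option linter.unusedSectionVars false
set_option linter.unusedSimpArgs false
namespace ANum
variable {F : Type*} [Field F] [Fintype F]

lemma degree_mul_lt' {M N : ℕ} {p r : F[X]} (hp : p.degree < (M : WithBot ℕ))
    (hr : r.degree < (N : WithBot ℕ)) : (p * r).degree < ((M + N : ℕ) : WithBot ℕ) := by
  by_cases h0 : p = 0
  · simp [h0, WithBot.bot_lt_coe]
  by_cases h1 : r = 0
  · simp [h1, WithBot.bot_lt_coe]
  rw [degree_eq_natDegree h0] at hp
  rw [degree_eq_natDegree h1] at hr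
  rw [degree_mul, degree_eq_natDegree h0, degree_eq_natDegree h1]
  norm_cast at hp hr ⊢
  omega

lemma exists_deg {D : ℕ} {v : Fin 3 → F} {c : Fin 3 → F[X]} (hc : Lead D v c) (hv : v ≠ 0) :
    ∃ i, c i ≠ 0 ∧ (c i).natDegree = D := by
  obtain ⟨j, hj⟩ := Function.ne_iff.1 hv
  refine ⟨j, ?_, ?_⟩
  · intro h0
    apply hj; rw [← (hc j).2, h0]; simp
  · apply le_antisymm (hc j).1
    apply le_natDegree_of_ne_zero
    rw [(hc j).2]; exact hj

/-- the leading vector of a nonzero vector -/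
lemma exists_lead (c : Fin 3 → F[X]) (hc : c ≠ 0) : ∃ e v, v ≠ 0 ∧ Lead e v c := by
  obtain ⟨j, -, hj⟩ := Finset.exists_max_image Finset.univ (fun i => (c i).degree)
    ⟨0, Finset.mem_univ _⟩
  have hj0 : c j ≠ 0 := by
    intro h0
    apply hc
    funext i
    have := hj i (Finset.mem_univ i)
    simpa [h0] using this
  refine ⟨(c j).natDegree, fun i => (c i).coeff (c j).natDegree, ?_, fun i => ⟨?_, rfl⟩⟩
  · intro h
    exact hj0 (leadingCoeff_eq_zero.1 (congrFun h j))
  · exact natDegree_le_natDegree (hj i (Finset.mem_univ i))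

lemma cross_zero {M : ℕ} {v : Fin 3 → F} {c Q Q' : Fin 3 → F[X]} (hc : Lead (2 * M) v c)
    (hv : v ≠ 0) (hp : Prim c) (hQ : InW M c Q) (hQ' : InW M c Q') :
    ∀ i j, Q i * Q' j = Q j * Q' i := by
  obtain ⟨u, hu⟩ := hp
  have d1 := hQ.2
  have d2 := hQ'.2
  simp only [dot, Fin.sum_univ_three] at hu d1 d2
  let R : Fin 3 → F[X] := ![Q 1 * Q' 2 - Q 2 * Q' 1, Q 2 * Q' 0 - Q 0 * Q' 2,
    Q 0 * Q' 1 - Q 1 * Q' 0]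
  have hR0 : R 0 = Q 1 * Q' 2 - Q 2 * Q' 1 := rfl
  have hR1 : R 1 = Q 2 * Q' 0 - Q 0 * Q' 2 := rfl
  have hR2 : R 2 = Q 0 * Q' 1 - Q 1 * Q' 0 := rfl
  have e01 : c 0 * R 1 = c 1 * R 0 := by
    rw [hR0, hR1]; linear_combination Q 2 * d2 - Q' 2 * d1
  have e12 : c 1 * R 2 = c 2 * R 1 := by
    rw [hR1, hR2]; linear_combination Q 0 * d2 - Q' 0 * d1
  have e20 : c 2 * R 0 = c 0 * R 2 := by
    rw [hR0, hR2]; linear_combination Q 1 * d2 - Q' 1 * d1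
  let h := u 0 * R 0 + u 1 * R 1 + u 2 * R 2
  have hR : ∀ i, R i = h * c i := by
    intro i
    fin_cases i
    · change R 0 = h * c 0
      simp only [h]
      linear_combination (-R 0) * hu - u 1 * e01 + u 2 * e20
    · change R 1 = h * c 1
      simp only [h]
      linear_combination (-R 1) * hu + u 0 * e01 - u 2 * e12
    · change R 2 = h * c 2
      simp only [h]
      linear_combination (-R 2) * hu - u 0 * e20 + u 1 * e12
  have hdeg : ∀ i, (R i).degree < ((M + M : ℕ) : WithBot ℕ) := by
    intro i
    rw [← mem_degreeLT]
    have hm : ∀ i j, Q i * Q' j ∈ degreeLT F (M + M) := fun i j =>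
      mem_degreeLT.2 (degree_mul_lt' (hQ.1 i) (hQ'.1 j))
    fin_cases i
    · exact Submodule.sub_mem _ (hm _ _) (hm _ _)
    · exact Submodule.sub_mem _ (hm _ _) (hm _ _)
    · exact Submodule.sub_mem _ (hm _ _) (hm _ _)
  have h0 : h = 0 := by
    by_contra hne
    obtain ⟨i, hi0, hi⟩ := exists_deg hc hv
    have := hdeg i
    rw [hR i, degree_mul, degree_eq_natDegree hne, degree_eq_natDegree hi0, hi] at this
    norm_cast at this
    omega
  have z0 := hR 0
  have z1 := hR 1
  have z2 := hR 2
  rw [h0, zero_mul] at z0 z1 z2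
  rw [hR0] at z0
  rw [hR1] at z1
  rw [hR2] at z2
  intro i j
  fin_cases i <;> fin_cases j <;> simp only [Fin.zero_eta, Fin.mk_one, Fin.reduceFinMk]
  · linear_combination z2
  · linear_combination -z1
  · linear_combination -z2
  · linear_combination z0
  · linear_combination z1
  · linear_combination -z0

lemma eq_mul {M : ℕ} {v : Fin 3 → F} {c Q Q' : Fin 3 → F[X]} (hc : Lead (2 * M) v c)
    (hv : v ≠ 0) (hp : Prim c) (hQ : InW M c Q) (hQ' : InW M c Q') (hpQ : Prim Q) :
    ∃ h : F[X], Q' = fun i => h * Q i := by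
  obtain ⟨u, hu⟩ := hpQ
  refine ⟨dot u Q', funext fun i => ?_⟩
  have hx := cross_zero hc hv hp hQ hQ'
  calc Q' i = dot u Q * Q' i := by rw [hu, one_mul]
    _ = dot u Q' * Q i := by
      simp only [dot, Finset.sum_mul]
      refine Finset.sum_congr rfl fun j _ => ?_
      linear_combination u j * hx j i

lemma deg_mul_lt_iff {e M : ℕ} (he : e < M) {w : Fin 3 → F} {Q : Fin 3 → F[X]}
    (hQ : Lead e w Q) (hw : w ≠ 0) (h : F[X]) :
    (∀ i, (h * Q i).degree < (M : WithBot ℕ)) ↔ h.degree < ((M - e : ℕ) : WithBot ℕ) := by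
  by_cases h0 : h = 0
  · simp [h0, WithBot.bot_lt_coe]
  constructor
  · intro hh
    obtain ⟨i, hi0, hi⟩ := exists_deg hQ hw
    have := hh i
    rw [degree_mul, degree_eq_natDegree h0, degree_eq_natDegree hi0, hi] at this
    rw [degree_eq_natDegree h0]
    norm_cast at this ⊢
    omega
  · intro hh i
    have h1 : (Q i).degree < ((e + 1 : ℕ) : WithBot ℕ) := by
      refine lt_of_le_of_lt (degree_le_of_natDegree_le (hQ i).1) ?_
      norm_cast; omega
    by_cases h2 : Q i = 0
    · simp [h2, WithBot.bot_lt_coe]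
    rw [degree_eq_natDegree h2] at h1
    rw [degree_eq_natDegree h0] at hh
    rw [degree_mul, degree_eq_natDegree h0, degree_eq_natDegree h2]
    norm_cast at h1 hh ⊢
    omega

lemma lead_inW {e M : ℕ} (he : e < M) {w : Fin 3 → F} {c Q : Fin 3 → F[X]}
    (hQ : Lead e w Q) (hd : dot Q c = 0) : InW M c Q := by
  refine ⟨fun i => lt_of_le_of_lt (degree_le_of_natDegree_le (hQ i).1) ?_, hd⟩
  norm_cast

lemma card_W {M e : ℕ} {v w : Fin 3 → F} {c Q : Fin 3 → F[X]} (hc : Lead (2 * M) v c)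
    (hv : v ≠ 0) (hp : Prim c) (he : e < M) (hQ : Lead e w Q) (hw : w ≠ 0) (hpQ : Prim Q)
    (hd : dot Q c = 0) :
    Nat.card {Q' // InW M c Q'} = Fintype.card F ^ (M - e) := by
  rw [← card_degreeLT (F := F)]
  symm
  refine Nat.card_congr (Equiv.ofBijective (fun h : degreeLT F (M - e) =>
    (⟨fun i => (h : F[X]) * Q i, (deg_mul_lt_iff he hQ hw _).2 (mem_degreeLT.1 h.2), by
      rw [dot_smul_left, hd, mul_zero]⟩ : {Q' // InW M c Q'})) ⟨?_, ?_⟩)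
  · rintro ⟨h, hh⟩ ⟨h', hh'⟩ heq
    obtain ⟨i, hi0, hi⟩ := exists_deg hQ hw
    have := congrFun (congrArg Subtype.val heq) i
    exact Subtype.ext (mul_right_cancel₀ hi0 this)
  · rintro ⟨Q', hQ'⟩
    obtain ⟨h, rfl⟩ := eq_mul hc hv hp (lead_inW he hQ hd) hQ' hpQ
    exact ⟨⟨h, mem_degreeLT.2 ((deg_mul_lt_iff he hQ hw h).1 hQ'.1)⟩, rfl⟩

lemma W_cases {M : ℕ} {v : Fin 3 → F} {c : Fin 3 → F[X]} (hc : Lead (2 * M) v c)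
    (hv : v ≠ 0) (hp : Prim c) :
    Nat.card {Q' // InW M c Q'} = 1 ∨ ∃ e, e < M ∧ ∃ w Q, w ≠ 0 ∧ Lead e w Q ∧ Prim Q ∧
      dot Q c = 0 := by
  by_cases h : ∃ Q', InW M c Q' ∧ Q' ≠ 0
  · right
    obtain ⟨Q', hQ', h0⟩ := h
    obtain ⟨h, hm, Q, hpQ, rfl⟩ := exists_prim Q' h0
    obtain ⟨e, w, hw, hQ⟩ := exists_lead Q hpQ.ne_zero
    refine ⟨e, ?_, w, Q, hw, hQ, hpQ, ?_⟩
    · obtain ⟨i, hi0, hi⟩ := exists_deg hQ hw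
      have := hQ'.1 i
      rw [degree_mul, degree_eq_natDegree hm.ne_zero, degree_eq_natDegree hi0, hi] at this
      norm_cast at this
      omega
    · have := hQ'.2
      rw [dot_smul_left] at this
      exact (mul_eq_zero.1 this).resolve_left hm.ne_zero
  · left
    push Not at h
    rw [Nat.card_eq_one_iff_unique]
    refine ⟨⟨fun a b => Subtype.ext ((h _ a.2).trans (h _ b.2).symm)⟩, ⟨⟨0, fun i => ?_, ?_⟩⟩⟩
    · simp [WithBot.bot_lt_coe]
    · simp [dot]

/-- condition on `Q`: primitive of exact degree `e` -/
def Exact (e : ℕ) (Q : Fin 3 → F[X]) : Prop := Prim Q ∧ ∃ w, w ≠ 0 ∧ Lead e w Q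

lemma card_exact_in_W {M e : ℕ} {v : Fin 3 → F} {c : Fin 3 → F[X]} (hc : Lead (2 * M) v c)
    (hv : v ≠ 0) (hp : Prim c) (he : e < M)
    (hW : Nat.card {Q' // InW M c Q'} = Fintype.card F ^ (M - e)) :
    Nat.card {Q // Exact e Q ∧ dot Q c = 0} = Fintype.card F - 1 := by
  classical
  have hq1 : 1 < Fintype.card F := Fintype.one_lt_card
  obtain ⟨w, Q, hw, hQ, hpQ, hd⟩ : ∃ w Q, w ≠ 0 ∧ Lead e w Q ∧ Prim Q ∧ dot Q c = 0 := by
    rcases W_cases hc hv hp with h1 | ⟨e', he', w, Q, hw, hQ, hpQ, hd⟩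
    · rw [hW] at h1
      have := Nat.one_lt_pow (n := M - e) (by omega) hq1
      omega
    · have h2 := card_W hc hv hp he' hQ hw hpQ hd
      rw [hW] at h2
      have := Nat.pow_right_injective hq1 h2
      obtain rfl : e = e' := by omega
      exact ⟨w, Q, hw, hQ, hpQ, hd⟩
  obtain ⟨i, hi0, hi⟩ := exists_deg hQ hw
  rw [← Fintype.card_units, ← Nat.card_eq_fintype_card]
  symm
  refine Nat.card_congr (Equiv.ofBijective (fun a : Fˣ =>
    (⟨fun i => C (a : F) * Q i, ⟨⟨?_, ?_⟩, ?_⟩⟩ : {Q // Exact e Q ∧ dot Q c = 0})) ⟨?_, ?_⟩)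
  · obtain ⟨u, hu⟩ := hpQ
    refine ⟨fun i => C ((a⁻¹ : Fˣ) : F) * u i, ?_⟩
    rw [dot_smul_left, dot_smul_right, hu, mul_one, ← C_mul]
    simp
  · refine ⟨fun i => a * w i, ?_, fun i => ⟨?_, ?_⟩⟩
    · intro h
      exact hw (funext fun i => by simpa using congrFun h i)
    · exact (natDegree_C_mul_le _ _).trans (hQ i).1
    · simp [(hQ i).2]
  · rw [dot_smul_left, hd, mul_zero]
  · intro a b hab
    have := congrFun (congrArg Subtype.val hab) i
    exact Units.ext (C_injective (mul_right_cancel₀ hi0 this))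
  · rintro ⟨Q', ⟨hp', w', hw', hQ'⟩, hd'⟩
    obtain ⟨h, rfl⟩ := eq_mul hc hv hp (lead_inW he hQ hd) (lead_inW he hQ' hd') hpQ
    have hu : IsUnit h := by
      obtain ⟨u, hu⟩ := hp'
      rw [dot_smul_right] at hu
      exact .of_mul_eq_one _ hu
    obtain ⟨r, hr, rfl⟩ := Polynomial.isUnit_iff.1 hu
    exact ⟨hr.unit, rfl⟩

lemma dotw_card (v : Fin 3 → F) (hv : v ≠ 0) :
    Nat.card {w : Fin 3 → F // w ≠ 0 ∧ ∑ i, w i * v i = 0} = Fintype.card F ^ 2 - 1 := by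
  classical
  obtain ⟨j, hj⟩ := Function.ne_iff.1 hv
  let φ : (Fin 3 → F) →ₗ[F] F := ∑ i, (v i) • LinearMap.proj i
  have hφ : ∀ w, φ w = ∑ i, w i * v i := fun w => by simp [φ, mul_comm]
  have hs : Function.Surjective φ := fun y => ⟨Pi.single j (y * (v j)⁻¹), by
    rw [hφ, Finset.sum_eq_single j]
    · simp only [Pi.single_eq_same]
      rw [mul_assoc, inv_mul_cancel₀ hj, mul_one]
    · intro b _ hb; simp [hb]
    · simp⟩
  have h := card_fiber φ hs 0
  rw [Nat.card_fun, Nat.card_eq_fintype_card (α := F), Nat.card_eq_fintype_card (α := Fin 3),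
    Fintype.card_fin] at h
  have hq : 0 < Fintype.card F := Fintype.card_pos
  have h2 : Nat.card {x // φ x = 0} = Fintype.card F ^ 2 := by
    apply Nat.eq_of_mul_eq_mul_right hq
    rw [h, pow_succ]
  rw [← h2, Nat.card_eq_fintype_card, Nat.card_eq_fintype_card]
  have h3 := Fintype.card_subtype_compl (fun x : {x // φ x = 0} => x = ⟨0, map_zero φ⟩)
  rw [Fintype.card_subtype_eq] at h3
  rw [← h3]
  refine Fintype.card_congr ((Equiv.subtypeEquivRight fun w => ?_).trans
    (Equiv.subtypeSubtypeEquivSubtypeInter (fun w => φ w = 0) (fun w => w ≠ 0)).symm |>.trans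
    (Equiv.subtypeEquivRight fun x => ?_))
  · rw [hφ, and_comm]
  · rw [ne_eq, not_iff_not, Subtype.ext_iff]

end ANum
set_option linter.unusedSectionVars false
set_option linter.unusedSimpArgs false
namespace ANum
variable {F : Type*} [Field F] [Fintype F]

/-- the number of primitive vectors with leading vector `v` and `a`-number `a` -/
noncomputable def N (v : Fin 3 → F) (M a : ℕ) : ℕ :=
  Nat.card {c : Fin 3 → F[X] // Lead (2 * M) v c ∧ Prim c ∧
    Nat.card {Q // InW M c Q} = Fintype.card F ^ a}

lemma card_prim_const (e : ℕ) (w : Fin 3 → F) (hw : w ≠ 0) :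
    Nat.card {c : Fin 3 → F[X] // Lead e w c ∧ Prim c} =
      if e = 0 then 1 else Fintype.card F ^ (3 * e) - Fintype.card F ^ (3 * e - 2) := by
  rcases e with _ | e
  · simp [card_prim_zero w hw]
  · have := card_prim_succ w hw e
    rw [if_neg (by omega)]
    have h1 : 3 * (e + 1) = 3 * e + 3 := by ring
    have h2 : 3 * (e + 1) - 2 = 3 * e + 1 := by omega
    rw [h2, h1]; omega

lemma lead_unique {e : ℕ} {w w' : Fin 3 → F} {Q : Fin 3 → F[X]} (h : Lead e w Q)
    (h' : Lead e w' Q) : w = w' := funext fun i => (h i).2.symm.trans (h' i).2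

lemma finite_exists_lead (e : ℕ) : Finite {Q : Fin 3 → F[X] // ∃ w, Lead e w Q} := by
  have : ∀ w : Fin 3 → F, Finite {Q : Fin 3 → F[X] // Lead e w Q} := fun w => finite_lead e w
  refine Finite.of_surjective (fun x : Σ w : Fin 3 → F, {Q : Fin 3 → F[X] // Lead e w Q} =>
    (⟨x.2.1, x.1, x.2.2⟩ : {Q : Fin 3 → F[X] // ∃ w, Lead e w Q})) ?_
  rintro ⟨Q, w, h⟩
  exact ⟨⟨w, Q, h⟩, rfl⟩

/-- the number of primitive vectors whose leading vector lies in a given set -/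
lemma card_exact_orth (v : Fin 3 → F) (hv : v ≠ 0) (e : ℕ) :
    Nat.card {Q : Fin 3 → F[X] // Prim Q ∧ ∃ w, w ≠ 0 ∧ ∑ i, w i * v i = 0 ∧ Lead e w Q} =
      (Fintype.card F ^ 2 - 1) *
      (if e = 0 then 1 else Fintype.card F ^ (3 * e) - Fintype.card F ^ (3 * e - 2)) := by
  classical
  have := finite_exists_lead (F := F) e
  have : Finite {Q : Fin 3 → F[X] // Prim Q ∧ ∃ w, w ≠ 0 ∧ ∑ i, w i * v i = 0 ∧ Lead e w Q} :=
    finite_of_imp (r := fun Q => ∃ w, Lead e w Q) fun Q h => ⟨_, h.2.choose_spec.2.2⟩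
  rw [← dotw_card v hv]
  rw [← card_rel (fun (w : Fin 3 → F) (Q : Fin 3 → F[X]) =>
    (w ≠ 0 ∧ ∑ i, w i * v i = 0) ∧ Lead e w Q ∧ Prim Q) (fun w => w ≠ 0 ∧ ∑ i, w i * v i = 0)
    _ (fun _ _ h => h.1) (fun w _ => ?_) (fun w hw => ?_)]
  · rw [card_rel' (fun (w : Fin 3 → F) (Q : Fin 3 → F[X]) =>
      (w ≠ 0 ∧ ∑ i, w i * v i = 0) ∧ Lead e w Q ∧ Prim Q)
      (fun Q => Prim Q ∧ ∃ w, w ≠ 0 ∧ ∑ i, w i * v i = 0 ∧ Lead e w Q) 1, mul_one]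
    · rintro w Q ⟨⟨h1, h2⟩, h3, h4⟩
      exact ⟨h4, w, h1, h2, h3⟩
    · intro Q _; infer_instance
    · rintro Q ⟨h4, w, h1, h2, h3⟩
      rw [Nat.card_eq_one_iff_unique]
      exact ⟨⟨fun a b => Subtype.ext (lead_unique a.2.2.1 b.2.2.1)⟩,
        ⟨⟨w, ⟨h1, h2⟩, h3, h4⟩⟩⟩
  · have := finite_lead e w
    exact finite_of_imp (r := Lead e w) fun Q h => h.2.1
  · rw [← card_prim_const e w hw.1]
    exact Nat.card_congr (Equiv.subtypeEquivRight fun Q => and_iff_right hw)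

lemma N_mul (v : Fin 3 → F) (hv : v ≠ 0) (M e : ℕ) (he : e < M) :
    N v M (M - e) * (Fintype.card F - 1) = (Fintype.card F ^ 2 - 1) *
      (if e = 0 then 1 else Fintype.card F ^ (3 * e) - Fintype.card F ^ (3 * e - 2)) *
      (Fintype.card F ^ (4 * M - e) - Fintype.card F ^ (4 * M - e - 1)) := by
  have := finite_exists_lead (F := F) e
  have := finite_lead (2 * M) v
  have : Finite {Q : Fin 3 → F[X] // Prim Q ∧ ∃ w, w ≠ 0 ∧ ∑ i, w i * v i = 0 ∧ Lead e w Q} :=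
    finite_of_imp (r := fun Q => ∃ w, Lead e w Q) fun Q h => ⟨_, h.2.choose_spec.2.2⟩
  have : Finite {c : Fin 3 → F[X] // Lead (2 * M) v c ∧ Prim c ∧
    Nat.card {Q // InW M c Q} = Fintype.card F ^ (M - e)} :=
    finite_of_imp (r := Lead (2 * M) v) fun c h => h.1
  rw [← card_exact_orth v hv e, N]
  have hZ1 : Nat.card {x : (Fin 3 → F[X]) × (Fin 3 → F[X]) //
      (Lead (2 * M) v x.1 ∧ Prim x.1) ∧ Exact e x.2 ∧ dot x.2 x.1 = 0} = _ :=
    card_rel (fun (c Q : Fin 3 → F[X]) =>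
    (Lead (2 * M) v c ∧ Prim c) ∧ Exact e Q ∧ dot Q c = 0) (fun c => Lead (2 * M) v c ∧ Prim c ∧
    Nat.card {Q // InW M c Q} = Fintype.card F ^ (M - e)) (Fintype.card F - 1)
    (by
      rintro c Q ⟨⟨h1, h2⟩, ⟨h3, w, hw, hQ⟩, hd⟩
      exact ⟨h1, h2, card_W h1 hv h2 he hQ hw h3 hd⟩)
    (by
      intro c _
      exact finite_of_imp (r := fun Q => ∃ w, Lead e w Q) fun Q h => ⟨_, h.2.1.2.choose_spec.2⟩)
    (by
      rintro c ⟨h1, h2, h3⟩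
      rw [← card_exact_in_W h1 hv h2 he h3]
      exact Nat.card_congr (Equiv.subtypeEquivRight fun Q => and_iff_right ⟨h1, h2⟩))
  generalize hK : Fintype.card F ^ (4 * M - e) - Fintype.card F ^ (4 * M - e - 1) = K
  have hZ2 := card_rel' (fun (c Q : Fin 3 → F[X]) =>
      (Lead (2 * M) v c ∧ Prim c) ∧ Exact e Q ∧ dot Q c = 0)
      (fun Q => Prim Q ∧ ∃ w, w ≠ 0 ∧ ∑ i, w i * v i = 0 ∧ Lead e w Q) K ?_ ?_ ?_
  · exact hZ1.symm.trans hZ2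
  · rintro c Q ⟨⟨h1, h2⟩, ⟨h3, w, hw, hQ⟩, hd⟩
    refine ⟨h3, w, hw, ?_, hQ⟩
    rw [← dot_coeff hQ h1, hd, coeff_zero]
  · intro Q _
    exact finite_of_imp (r := Lead (2 * M) v) fun c h => h.1.1
  · rintro Q ⟨hp, w, hw, hs, hQ⟩
    have h := P_eq (D := 2 * M - 1) hQ hw hv hp (by omega) hs
    have e1 : 2 * M - 1 + 1 = 2 * M := by omega
    have e2 : 2 * (2 * M - 1) - e + 1 = 4 * M - e - 1 := by omega
    have e3 : 2 * (2 * M - 1) - e + 2 = 4 * M - e := by omega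
    rw [e1, e2, e3] at h
    rw [← hK, ← h, Nat.add_sub_cancel, P]
    refine Nat.card_congr (Equiv.subtypeEquivRight fun c => ?_)
    have : Exact e Q := ⟨hp, w, hw, hQ⟩
    tauto

lemma W_pow {M : ℕ} {v : Fin 3 → F} {c : Fin 3 → F[X]} (hc : Lead (2 * M) v c)
    (hv : v ≠ 0) (hp : Prim c) :
    ∃ a ≤ M, Nat.card {Q' // InW M c Q'} = Fintype.card F ^ a := by
  rcases W_cases hc hv hp with h | ⟨e, he, w, Q, hw, hQ, hpQ, hd⟩
  · exact ⟨0, Nat.zero_le _, by simpa using h⟩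
  · exact ⟨M - e, Nat.sub_le _ _, card_W hc hv hp he hQ hw hpQ hd⟩

lemma N_zero_of_lt (v : Fin 3 → F) (hv : v ≠ 0) (M a : ℕ) (ha : M < a) : N v M a = 0 := by
  rw [N, Nat.card_eq_zero]
  left
  refine ⟨?_⟩
  rintro ⟨c, hc, hp, h⟩
  obtain ⟨b, hb, h'⟩ := W_pow hc hv hp
  rw [h] at h'
  have := Nat.pow_right_injective (Fintype.one_lt_card (α := F)) h'
  omega

lemma N_sum (v : Fin 3 → F) (hv : v ≠ 0) (M : ℕ) :
    Nat.card {c : Fin 3 → F[X] // Lead (2 * M) v c ∧ Prim c} =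
      ∑ a ∈ Finset.range (M + 1), N v M a := by
  have := finite_lead (2 * M) v
  have hfin : ∀ a : Fin (M + 1), Finite {c : Fin 3 → F[X] // Lead (2 * M) v c ∧ Prim c ∧
    Nat.card {Q // InW M c Q} = Fintype.card F ^ (a : ℕ)} := fun a =>
    finite_of_imp (r := Lead (2 * M) v) fun c h => h.1
  rw [Finset.sum_range]
  simp only [N]
  rw [← Nat.card_sigma]
  symm
  refine Nat.card_congr (Equiv.ofBijective (fun x => ⟨x.2.1, x.2.2.1, x.2.2.2.1⟩) ⟨?_, ?_⟩)
  · rintro ⟨a, c, h1, h2, h3⟩ ⟨a', c', h1', h2', h3'⟩ h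
    obtain rfl : c = c' := congrArg Subtype.val h
    rw [h3] at h3'
    obtain rfl : a = a' := Fin.ext (Nat.pow_right_injective (Fintype.one_lt_card (α := F)) h3')
    rfl
  · rintro ⟨c, h1, h2⟩
    obtain ⟨a, ha, h⟩ := W_pow h1 hv h2
    exact ⟨⟨⟨a, Nat.lt_succ_of_le ha⟩, c, h1, h2, h⟩, rfl⟩

/-- the density -/
noncomputable def dens (q : ℚ) (M a : ℕ) : ℚ :=
  if a = 0 then 1 - q⁻¹
       else if a < M then q ^ (1 - 2 * (a : ℤ)) * (1 - q ^ (-2 : ℤ))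
       else if a = M then q ^ (1 - 2 * (a : ℤ))
       else 0

lemma zp {q : ℚ} (hq : q ≠ 0) (a : ℕ) : q ^ (1 - 2 * (a : ℤ)) = q / (q ^ a) ^ 2 := by
  rw [zpow_sub₀ hq, zpow_one, ← pow_mul]
  congr 1
  rw [mul_comm 2 (a : ℤ)]
  exact_mod_cast rfl

lemma zp2 (q : ℚ) : q ^ (-2 : ℤ) = (q ^ 2)⁻¹ := by
  rw [zpow_neg]; rfl

lemma N_pos (v : Fin 3 → F) (hv : v ≠ 0) (M a : ℕ) (ha : 0 < a) (haM : a ≤ M) :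
    (N v M a : ℚ) = dens (Fintype.card F) M a *
      ((Fintype.card F : ℚ) ^ (6 * M) * (1 - (Fintype.card F : ℚ) ^ (-2 : ℤ))) := by
  obtain ⟨e, rfl⟩ := Nat.exists_eq_add_of_le' haM
  have h := N_mul v hv (e + a) e (by omega)
  rw [Nat.add_sub_cancel_left] at h
  have hq1 : 1 < Fintype.card F := Fintype.one_lt_card
  set q := Fintype.card F with hqdef
  have hq0 : (q : ℚ) ≠ 0 := by positivity
  have hq1' : (q : ℚ) - 1 ≠ 0 := by
    have : (1 : ℚ) < q := by exact_mod_cast hq1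
    linarith
  have h1 : 1 ≤ q := by omega
  have hA : ((q ^ (4 * (e + a) - e) - q ^ (4 * (e + a) - e - 1) : ℕ) : ℚ)
      = ((q : ℚ) ^ a) ^ 4 * ((q : ℚ) ^ e) ^ 3 * (1 - 1 / q) := by
    rw [Nat.cast_sub (Nat.pow_le_pow_right h1 (by omega))]
    obtain ⟨k, hk⟩ : ∃ k, 4 * (e + a) - e = k + 1 := ⟨4 * (e + a) - e - 1, by omega⟩
    have : ((q : ℚ) ^ a) ^ 4 * ((q : ℚ) ^ e) ^ 3 = (q : ℚ) ^ (k + 1) := by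
      rw [← pow_mul, ← pow_mul, ← pow_add]; congr 1; omega
    rw [this, hk, Nat.add_sub_cancel]
    push_cast
    field_simp
    ring
  have hB : ((q ^ 2 - 1 : ℕ) : ℚ) = (q : ℚ) ^ 2 - 1 := by
    rw [Nat.cast_sub (Nat.one_le_pow _ _ h1)]; push_cast; rfl
  have hD : ((q - 1 : ℕ) : ℚ) = (q : ℚ) - 1 := by
    rw [Nat.cast_sub h1]; push_cast; rfl
  have h6 : (q : ℚ) ^ (6 * (e + a)) = ((q : ℚ) ^ a) ^ 6 * ((q : ℚ) ^ e) ^ 6 := by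
    rw [← pow_mul, ← pow_mul, ← pow_add]; congr 1; ring
  have hx : (q : ℚ) ^ a ≠ 0 := pow_ne_zero _ hq0
  have hQ := congrArg (Nat.cast (R := ℚ)) h
  rw [Nat.cast_mul, Nat.cast_mul, Nat.cast_mul, hA, hB, hD] at hQ
  apply mul_right_cancel₀ hq1'
  rw [hQ, zp2, h6]
  clear hQ h
  rcases Nat.eq_zero_or_pos e with rfl | he
  · rw [if_pos rfl, dens, if_neg (by omega), if_neg (by omega), if_pos (by omega), zp hq0]
    simp only [pow_zero, one_pow]
    push_cast
    field_simp
  · rw [dens, if_neg (by omega : ¬ a = 0), if_pos (by omega : a < e + a), if_neg (by omega : ¬ e = 0),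
      zp hq0, zp2, Nat.cast_sub (Nat.pow_le_pow_right h1 (by omega))]
    obtain ⟨k, hk⟩ : ∃ k, 3 * e = k + 2 := ⟨3 * e - 2, by omega⟩
    have h3 : (q : ℚ) ^ (k + 2) = ((q : ℚ) ^ e) ^ 3 := by
      rw [← pow_mul]; congr 1; omega
    have h4 : (q : ℚ) ^ k = ((q : ℚ) ^ e) ^ 3 / q ^ 2 := by
      rw [← h3, pow_add]; field_simp
    rw [hk, Nat.add_sub_cancel]
    push_cast
    rw [h3, h4]
    field_simp

lemma dens_sum {q : ℚ} (hq : q ≠ 0) (n : ℕ) :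
    ∑ a ∈ Finset.range (n + 1), dens q (n + 1) (a + 1) = q⁻¹ := by
  have h : ∀ m, ∑ a ∈ Finset.range m, q / (q ^ (a + 1)) ^ 2 * (1 - (q ^ 2)⁻¹) =
      q⁻¹ - q⁻¹ / (q ^ m) ^ 2 := by
    intro m
    induction m with
    | zero => simp
    | succ m ih =>
      rw [Finset.sum_range_succ, ih]
      have : q ^ m ≠ 0 := pow_ne_zero _ hq
      rw [pow_succ]
      field_simp
      ring
  rw [Finset.sum_range_succ]
  have h1 : ∑ a ∈ Finset.range n, dens q (n + 1) (a + 1) = q⁻¹ - q⁻¹ / (q ^ n) ^ 2 := by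
    rw [← h]
    refine Finset.sum_congr rfl fun a ha => ?_
    rw [Finset.mem_range] at ha
    rw [dens, if_neg (by omega), if_pos (by omega), zp hq, zp2]
  rw [h1, dens, if_neg (by omega), if_neg (by omega), if_pos rfl, zp hq, pow_succ]
  have : q ^ n ≠ 0 := pow_ne_zero _ hq
  field_simp
  ring

lemma N_eq (v : Fin 3 → F) (hv : v ≠ 0) (M a : ℕ) (hM : 0 < M) :
    (N v M a : ℚ) = dens (Fintype.card F) M a *
      ((Fintype.card F : ℚ) ^ (6 * M) * (1 - (Fintype.card F : ℚ) ^ (-2 : ℤ))) := by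
  rcases Nat.eq_zero_or_pos a with rfl | ha
  · obtain ⟨n, rfl⟩ : ∃ n, M = n + 1 := ⟨M - 1, by omega⟩
    have hs := N_sum v hv (n + 1)
    have ht := card_prim_succ v hv (2 * (n + 1) - 1)
    have e1 : 2 * (n + 1) - 1 + 1 = 2 * (n + 1) := by omega
    have e2 : 3 * (2 * (n + 1) - 1) + 1 = 6 * n + 4 := by omega
    have e3 : 3 * (2 * (n + 1) - 1) + 3 = 6 * n + 6 := by omega
    rw [e1, e2, e3, hs, Finset.sum_range_succ'] at ht
    have htQ := congrArg (Nat.cast (R := ℚ)) ht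
    push_cast at htQ
    rw [Finset.sum_congr rfl fun a ha => N_pos v hv (n + 1) (a + 1) (by omega)
      (by have := Finset.mem_range.1 ha; omega), ← Finset.sum_mul] at htQ
    have hq0 : (Fintype.card F : ℚ) ≠ 0 := by
      have : 0 < Fintype.card F := Fintype.card_pos
      positivity
    rw [dens_sum hq0] at htQ
    rw [dens, if_pos rfl]
    rw [zp2] at htQ ⊢
    have e6 : 6 * (n + 1) = 6 * n + 6 := by ring
    rw [e6] at htQ ⊢
    have : (Fintype.card F : ℚ) ^ (6 * n + 6) * (1 - ((Fintype.card F : ℚ) ^ 2)⁻¹)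
      = (Fintype.card F : ℚ) ^ (6 * n + 6) - (Fintype.card F : ℚ) ^ (6 * n + 4) := by
      rw [pow_add, pow_add]; field_simp
    rw [this] at htQ ⊢
    linear_combination htQ
  · rcases Nat.lt_or_ge M a with h | h
    · rw [N_zero_of_lt v hv M a h, dens, if_neg (by omega), if_neg (by omega), if_neg (by omega)]
      simp
    · exact N_pos v hv M a ha h

/-- summing over leading vectors -/
lemma card_family (L : (Fin 3 → F) → Prop) (hL : ∀ v, L v → v ≠ 0) (M a : ℕ) (hM : 0 < M) :
    (Nat.card {c : Fin 3 → F[X] // (∃ v, L v ∧ Lead (2 * M) v c) ∧ Prim c ∧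
      Nat.card {Q // InW M c Q} = Fintype.card F ^ a} : ℚ) =
    Nat.card {v // L v} * (dens (Fintype.card F) M a *
      ((Fintype.card F : ℚ) ^ (6 * M) * (1 - (Fintype.card F : ℚ) ^ (-2 : ℤ)))) := by
  have := finite_exists_lead (F := F) (2 * M)
  have : Finite {c : Fin 3 → F[X] // (∃ v, L v ∧ Lead (2 * M) v c) ∧ Prim c ∧
      Nat.card {Q // InW M c Q} = Fintype.card F ^ a} :=
    finite_of_imp (r := fun c => ∃ v, Lead (2 * M) v c) fun c h => ⟨_, h.1.choose_spec.2⟩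
  have hfin : ∀ v : Fin 3 → F, Finite {c : Fin 3 → F[X] // Lead (2 * M) v c ∧ Prim c ∧
    Nat.card {Q // InW M c Q} = Fintype.card F ^ a} := fun v =>
    have := finite_lead (2 * M) v
    finite_of_imp (r := Lead (2 * M) v) fun c h => h.1
  classical
  have e : {c : Fin 3 → F[X] // (∃ v, L v ∧ Lead (2 * M) v c) ∧ Prim c ∧
      Nat.card {Q // InW M c Q} = Fintype.card F ^ a} ≃
      Σ v : {v // L v}, {c : Fin 3 → F[X] // Lead (2 * M) v.1 c ∧ Prim c ∧
        Nat.card {Q // InW M c Q} = Fintype.card F ^ a} := by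
    symm
    refine Equiv.ofBijective (fun x => ⟨x.2.1, ⟨x.1.1, x.1.2, x.2.2.1⟩, x.2.2.2⟩) ⟨?_, ?_⟩
    · rintro ⟨⟨v, hv⟩, c, h1, h2⟩ ⟨⟨v', hv'⟩, c', h1', h2'⟩ h
      obtain rfl : c = c' := congrArg Subtype.val h
      obtain rfl := lead_unique h1 h1'
      rfl
    · rintro ⟨c, ⟨v, hv, h1⟩, h2⟩
      exact ⟨⟨⟨v, hv⟩, c, h1, h2⟩, rfl⟩
  rw [Nat.card_congr e, Nat.card_sigma]
  push_cast
  rw [Finset.sum_congr rfl fun v _ => N_eq v.1 (hL _ v.2) M a hM]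
  simp [Nat.card_eq_fintype_card]

end ANum
set_option linter.unusedSectionVars false
set_option linter.unusedSimpArgs false
namespace ANum
variable {F : Type*} [Field F] [Fintype F] [CharP F 3]

/-- recombination of the three components -/
noncomputable def comb (c : Fin 3 → F[X]) : F[X] := c 0 ^ 3 + c 1 ^ 3 * X + c 2 ^ 3 * X ^ 2

lemma cube_inj {x y : F} (h : x ^ 3 = y ^ 3) : x = y := by
  have : Fact (Nat.Prime 3) := ⟨Nat.prime_three⟩
  exact frobenius_inj F 3 h

lemma cube_zero {x : F} : x ^ 3 = 0 ↔ x = 0 := by simp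

lemma cube_one {x : F} : x ^ 3 = 1 ↔ x = 1 :=
  ⟨fun h => cube_inj (by simpa using h), fun h => by simp [h]⟩

lemma coeff_cube (p : F[X]) (n : ℕ) :
    (p ^ 3).coeff n = if 3 ∣ n then (p.coeff (n / 3)) ^ 3 else 0 := by
  have : Fact (Nat.Prime 3) := ⟨Nat.prime_three⟩
  rw [← map_frobenius_expand (p := 3), coeff_map, coeff_expand (by norm_num)]
  split_ifs <;> simp [frobenius_def]

lemma coeff_comb (c : Fin 3 → F[X]) (n : ℕ) (i : Fin 3) :
    (comb c).coeff (3 * n + i) = (c i).coeff n ^ 3 := by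
  rw [comb, coeff_add, coeff_add, coeff_mul_X_pow', coeff_cube]
  have hX : (c 1 ^ 3 * X).coeff (3 * n + i) =
      if 1 ≤ 3 * n + i then (c 1 ^ 3).coeff (3 * n + i - 1) else 0 := by
    rw [← coeff_mul_X_pow', pow_one]
  rw [hX, coeff_cube, coeff_cube]
  fin_cases i
  · change (if 3 ∣ 3 * n + 0 then _ else _) + (if 1 ≤ 3 * n + 0 then
      (if 3 ∣ 3 * n + 0 - 1 then _ else _) else _) + (if 2 ≤ 3 * n + 0 then
      (if 3 ∣ 3 * n + 0 - 2 then _ else _) else _) = _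
    have e : (3 * n + 0) / 3 = n := by omega
    rw [if_pos (by omega)]
    have h1 : ∀ x : F, (if 1 ≤ 3 * n + 0 then (if 3 ∣ 3 * n + 0 - 1 then x else 0) else 0) = 0 := by
      intro x; split_ifs <;> first | rfl | omega
    have h2 : ∀ x : F, (if 2 ≤ 3 * n + 0 then (if 3 ∣ 3 * n + 0 - 2 then x else 0) else 0) = 0 := by
      intro x; split_ifs <;> first | rfl | omega
    rw [h1, h2]
    simp
  · change (if 3 ∣ 3 * n + 1 then _ else _) + (if 1 ≤ 3 * n + 1 then
      (if 3 ∣ 3 * n + 1 - 1 then (c 1).coeff ((3 * n + 1 - 1) / 3) ^ 3 else _) else _) +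
      (if 2 ≤ 3 * n + 1 then
      (if 3 ∣ 3 * n + 1 - 2 then _ else _) else _) = _
    have h2 : ∀ x : F, (if 2 ≤ 3 * n + 1 then (if 3 ∣ 3 * n + 1 - 2 then x else 0) else 0) = 0 := by
      intro x; split_ifs <;> first | rfl | omega
    have e : (3 * n + 1 - 1) / 3 = n := by omega
    rw [if_neg (by omega), h2, if_pos (by omega), if_pos (by omega), e]
    simp
  · change (if 3 ∣ 3 * n + 2 then _ else _) + (if 1 ≤ 3 * n + 2 then
      (if 3 ∣ 3 * n + 2 - 1 then _ else _) else _) + (if 2 ≤ 3 * n + 2 then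
      (if 3 ∣ 3 * n + 2 - 2 then (c 2).coeff ((3 * n + 2 - 2) / 3) ^ 3 else _) else _) = _
    have h2 : ∀ x : F, (if 1 ≤ 3 * n + 2 then (if 3 ∣ 3 * n + 2 - 1 then x else 0) else 0) = 0 := by
      intro x; split_ifs <;> first | rfl | omega
    have e : (3 * n + 2 - 2) / 3 = n := by omega
    rw [if_neg (by omega), h2, if_pos (by omega), if_pos (by omega), e]
    simp

lemma forall_index (p : ℕ → Prop) : (∀ m, p m) ↔ ∀ (n : ℕ) (i : Fin 3), p (3 * n + i) := by
  refine ⟨fun h n i => h _, fun h m => ?_⟩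
  have := h (m / 3) ⟨m % 3, Nat.mod_lt _ (by norm_num)⟩
  simpa [Nat.div_add_mod] using this

lemma comb_bijective : Function.Bijective (comb : (Fin 3 → F[X]) → F[X]) := by
  have : Fact (Nat.Prime 3) := ⟨Nat.prime_three⟩
  constructor
  · intro c d h
    funext i
    ext n
    apply cube_inj
    rw [← coeff_comb, ← coeff_comb, h]
  · intro f
    let c : Fin 3 → F[X] := fun i => ∑ n ∈ Finset.range (f.natDegree + 1),
      monomial n ((frobeniusEquiv F 3).symm (f.coeff (3 * n + i)))
    refine ⟨c, Polynomial.ext ?_⟩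
    rw [forall_index]
    intro n i
    have : (c i).coeff n = (frobeniusEquiv F 3).symm (f.coeff (3 * n + i)) := by
      simp only [c, finsetSum_coeff, coeff_monomial, Finset.sum_ite_eq', Finset.mem_range]
      split_ifs with h
      · rfl
      · rw [coeff_eq_zero_of_natDegree_lt (by omega), map_zero]
    rw [coeff_comb, this]
    exact frobeniusEquiv_symm_pow_p F 3 _

lemma comb_mul (p : F[X]) (c : Fin 3 → F[X]) : comb (fun i => p * c i) = p ^ 3 * comb c := by
  simp only [comb]; ring

lemma cubefree_iff (c : Fin 3 → F[X]) :
    (∀ p : F[X], 0 < p.degree → ¬ p ^ 3 ∣ comb c) ↔ Prim c := by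
  constructor
  · intro h
    have hc : c ≠ 0 := by
      rintro rfl
      apply h X (by simp)
      simp [comb]
    obtain ⟨d, hm, c', hp, rfl⟩ := exists_prim c hc
    have hd : ¬ 0 < d.degree := fun hd => h d hd ⟨comb c', comb_mul d c'⟩
    have : d = 1 := by
      apply hm.natDegree_eq_zero.1
      rw [← natDegree_pos_iff_degree_pos] at hd
      omega
    simpa [this] using hp
  · rintro ⟨u, hu⟩ p hp ⟨r, hr⟩
    obtain ⟨d, rfl⟩ := comb_bijective.2 r
    rw [← comb_mul] at hr
    obtain rfl := comb_bijective.1 hr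
    rw [dot_smul_right] at hu
    have : IsUnit p := .of_mul_eq_one _ hu
    rw [degree_eq_zero_of_isUnit this] at hp
    exact lt_irrefl _ hp

lemma monic_iff (f : F[X]) (n : ℕ) :
    f.Monic ∧ f.natDegree = n ↔ f.coeff n = 1 ∧ ∀ m, n < m → f.coeff m = 0 := by
  constructor
  · rintro ⟨h, rfl⟩
    exact ⟨h, fun m hm => coeff_eq_zero_of_natDegree_lt hm⟩
  · rintro ⟨h1, h2⟩
    have : f.natDegree = n := by
      apply le_antisymm
      · exact natDegree_le_iff_coeff_eq_zero.2 h2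
      · exact le_natDegree_of_ne_zero (by rw [h1]; exact one_ne_zero)
    exact ⟨by rw [Monic, leadingCoeff, this, h1], this⟩

lemma comb_zero_iff (c : Fin 3 → F[X]) (n : ℕ) :
    (∀ m, n ≤ m → (comb c).coeff m = 0) ↔ ∀ (m : ℕ) (i : Fin 3), n ≤ 3 * m + i → (c i).coeff m = 0 := by
  rw [forall_index]
  simp only [coeff_comb, cube_zero]

lemma aux (M g n a : ℕ) (hM : 0 < M) (L : (Fin 3 → F) → Prop) (hL : ∀ v, L v → v ≠ 0)
    (hlead : ∀ c : Fin 3 → F[X], ((comb c).Monic ∧ (comb c).natDegree = n) ↔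
      ∃ v, L v ∧ Lead (2 * M) v c)
    (hW : ∀ (c Q : Fin 3 → F[X]) (v : Fin 3 → F), L v → Lead (2 * M) v c → dot Q c = 0 →
      ((comb (fun i => Q i.rev)).degree < (g : WithBot ℕ) ↔ ∀ i, (Q i).degree < (M : WithBot ℕ))) :
    (Nat.card {f : F[X] // f.Monic ∧ f.natDegree = n ∧
        (∀ p : F[X], 0 < p.degree → ¬ p ^ 3 ∣ f) ∧
        Nat.card {Q : F[X] // Q.degree < (g : WithBot ℕ) ∧
          ∃ Q0 Q1 Q2 c0 c1 c2 : F[X],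
            f = c0 ^ 3 + c1 ^ 3 * X + c2 ^ 3 * X ^ 2 ∧
            Q = Q0 ^ 3 + Q1 ^ 3 * X + Q2 ^ 3 * X ^ 2 ∧
            Q2 * c0 + Q1 * c1 + Q0 * c2 = 0} = Fintype.card F ^ a} : ℚ) =
    Nat.card {v // L v} * (dens (Fintype.card F) M a *
      ((Fintype.card F : ℚ) ^ (6 * M) * (1 - (Fintype.card F : ℚ) ^ (-2 : ℤ)))) := by
  rw [← card_family L hL M a hM]
  congr 1
  symm
  refine Nat.card_congr ((Equiv.ofBijective _ comb_bijective).subtypeEquiv fun c => ?_)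
  simp only [Equiv.ofBijective_apply]
  rw [← and_assoc (a := (comb c).Monic), hlead, cubefree_iff]
  refine and_congr_right fun ⟨v, hv, hc⟩ => and_congr_right fun hp => ?_
  have hrev : Function.Bijective (fun Q : Fin 3 → F[X] => fun i : Fin 3 => Q i.rev) :=
    Function.Involutive.bijective fun Q => by funext i; simp
  have : Nat.card {Q // InW M c Q} = Nat.card {Q : F[X] // Q.degree < (g : WithBot ℕ) ∧
          ∃ Q0 Q1 Q2 c0 c1 c2 : F[X],
            comb c = c0 ^ 3 + c1 ^ 3 * X + c2 ^ 3 * X ^ 2 ∧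
            Q = Q0 ^ 3 + Q1 ^ 3 * X + Q2 ^ 3 * X ^ 2 ∧
            Q2 * c0 + Q1 * c1 + Q0 * c2 = 0} := by
    refine Nat.card_congr ((Equiv.ofBijective _ (comb_bijective.comp hrev)).subtypeEquiv fun Q => ?_)
    simp only [Equiv.ofBijective_apply, Function.comp]
    have hex : (∃ Q0 Q1 Q2 c0 c1 c2 : F[X],
            comb c = c0 ^ 3 + c1 ^ 3 * X + c2 ^ 3 * X ^ 2 ∧
            comb (fun i => Q i.rev) = Q0 ^ 3 + Q1 ^ 3 * X + Q2 ^ 3 * X ^ 2 ∧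
            Q2 * c0 + Q1 * c1 + Q0 * c2 = 0) ↔ dot Q c = 0 := by
      constructor
      · rintro ⟨Q0, Q1, Q2, c0, c1, c2, h1, h2, h3⟩
        have h1' : comb c = comb ![c0, c1, c2] := h1
        have h2' : comb (fun i => Q i.rev) = comb ![Q0, Q1, Q2] := h2
        have h1'' := comb_bijective.1 h1'
        have h2'' := comb_bijective.1 h2'
        have a0 : Q 2 = Q0 := congrFun h2'' 0
        have a1 : Q 1 = Q1 := congrFun h2'' 1
        have a2 : Q 0 = Q2 := congrFun h2'' 2
        rw [h1'']
        simp only [dot, Fin.sum_univ_three, a0, a1, a2]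
        exact h3
      · intro h
        refine ⟨Q 2, Q 1, Q 0, c 0, c 1, c 2, rfl, rfl, ?_⟩
        simpa only [dot, Fin.sum_univ_three] using h
    rw [hex, InW]
    exact and_congr_left fun hd => (hW c Q v hv hc hd).symm
  rw [this]

end ANum
set_option linter.unusedSectionVars false
set_option linter.unusedSimpArgs false
namespace ANum
variable {F : Type*} [Field F] [Fintype F] [CharP F 3]

/-- admissible leading vectors -/
def LV (j : Fin 3) (v : Fin 3 → F) : Prop := v j = 1 ∧ ∀ i, j < i → v i = 0

lemma LV.ne_zero {j : Fin 3} {v : Fin 3 → F} (h : LV j v) : v ≠ 0 := by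
  rintro rfl
  exact zero_ne_one h.1

lemma card_LV (j : Fin 3) : Nat.card {v : Fin 3 → F // LV j v} = Fintype.card F ^ (j : ℕ) := by
  have hd : ∀ v : Fin 3 → F, ∀ i : Fin 3, v i = ![v 0, v 1, v 2] i := by
    intro v i; fin_cases i <;> rfl
  fin_cases j
  · change Nat.card {v : Fin 3 → F // LV 0 v} = Fintype.card F ^ 0
    rw [pow_zero, Nat.card_eq_one_iff_unique]
    refine ⟨⟨fun v w => Subtype.ext (funext fun i => ?_)⟩, ⟨⟨![1, 0, 0], rfl, ?_⟩⟩⟩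
    · rw [hd v.1, hd w.1, v.2.1, w.2.1, v.2.2 1 (by decide), w.2.2 1 (by decide),
        v.2.2 2 (by decide), w.2.2 2 (by decide)]
    · intro i hi; fin_cases i
      · exact absurd hi (by decide)
      · rfl
      · rfl
  · change Nat.card {v : Fin 3 → F // LV 1 v} = Fintype.card F ^ 1
    rw [pow_one, ← Nat.card_eq_fintype_card]
    refine Nat.card_congr
      { toFun := fun v => v.1 0
        invFun := fun x => ⟨![x, 1, 0], rfl, ?_⟩
        left_inv := fun v => Subtype.ext (funext fun i => ?_)
        right_inv := fun x => rfl }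
    · intro i hi; fin_cases i
      · exact absurd hi (by decide)
      · exact absurd hi (by decide)
      · rfl
    · rw [hd v.1 i, v.2.1, v.2.2 2 (by decide)]
  · change Nat.card {v : Fin 3 → F // LV 2 v} = Fintype.card F ^ 2
    rw [pow_two, ← Nat.card_eq_fintype_card, ← Nat.card_prod]
    refine Nat.card_congr
      { toFun := fun v => (v.1 0, v.1 1)
        invFun := fun x => ⟨![x.1, x.2, 1], rfl, ?_⟩
        left_inv := fun v => Subtype.ext (funext fun i => ?_)
        right_inv := fun x => rfl }
    · intro i hi; fin_cases i
      · exact absurd hi (by decide)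
      · exact absurd hi (by decide)
      · exact absurd hi (by decide)
    · rw [hd v.1 i, v.2.1]

lemma lead_iff (M : ℕ) (j : Fin 3) (c : Fin 3 → F[X]) :
    ((comb c).Monic ∧ (comb c).natDegree = 6 * M + j) ↔ ∃ v, LV j v ∧ Lead (2 * M) v c := by
  have e : 6 * M + (j : ℕ) = 3 * (2 * M) + j := by ring
  rw [monic_iff, e, coeff_comb, cube_one]
  have h := comb_zero_iff c (3 * (2 * M) + j + 1)
  simp only [Nat.succ_le_iff] at h
  rw [h]
  constructor
  · rintro ⟨h1, h2⟩
    refine ⟨fun i => (c i).coeff (2 * M), ⟨h1, fun i hi => h2 _ _ ?_⟩, fun i => ⟨?_, rfl⟩⟩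
    · have : (j : ℕ) < i := hi
      omega
    · rw [natDegree_le_iff_coeff_eq_zero]
      intro m hm
      apply h2
      have := j.2
      omega
  · rintro ⟨v, ⟨h1, h2⟩, hc⟩
    refine ⟨(hc j).2.trans h1, fun m i hm => ?_⟩
    rcases Nat.lt_trichotomy m (2 * M) with h | rfl | h
    · have := i.2
      omega
    · rw [(hc i).2]
      exact h2 i (Fin.lt_def.2 (by omega))
    · exact coeff_eq_zero_of_natDegree_lt (lt_of_le_of_lt (hc i).1 h)

lemma deg_iff (M : ℕ) (Q : Fin 3 → F[X]) :
    (comb (fun i => Q i.rev)).degree < ((3 * M : ℕ) : WithBot ℕ) ↔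
      ∀ i, (Q i).degree < (M : WithBot ℕ) := by
  rw [degree_lt_iff_coeff_zero, comb_zero_iff]
  simp only [degree_lt_iff_coeff_zero]
  constructor
  · intro h i m hm
    have := h m i.rev (by omega)
    simpa using this
  · intro h m i hm
    apply h
    have := i.2
    omega

lemma deg_iff' (M : ℕ) (hM : 0 < M) (c Q : Fin 3 → F[X]) (v : Fin 3 → F) (hv : LV 0 v)
    (hc : Lead (2 * M) v c) (hd : dot Q c = 0) :
    (comb (fun i => Q i.rev)).degree < ((3 * M - 1 : ℕ) : WithBot ℕ) ↔
      ∀ i, (Q i).degree < (M : WithBot ℕ) := by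
  constructor
  · intro h
    rw [← deg_iff]
    refine h.trans ?_
    norm_cast
    omega
  · intro h
    have hQ : Lead (M - 1) (fun i => (Q i).coeff (M - 1)) Q := fun i => by
      refine ⟨?_, rfl⟩
      rw [natDegree_le_iff_coeff_eq_zero]
      intro m hm
      exact (degree_lt_iff_coeff_zero _ _).1 (h i) m (by omega)
    have h0 := dot_coeff hQ hc
    rw [hd, coeff_zero, Fin.sum_univ_three, hv.1, hv.2 1 (by decide), hv.2 2 (by decide)] at h0
    have h1 : (Q 0).coeff (M - 1) = 0 := by simpa using h0.symm
    rw [degree_lt_iff_coeff_zero, comb_zero_iff]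
    intro m i hm
    rcases Nat.lt_or_ge m M with hlt | hge
    · have hi := i.2
      obtain rfl : m = M - 1 := by omega
      obtain rfl : i = 2 := Fin.ext (by change (i : ℕ) = 2; omega)
      exact h1
    · exact (degree_lt_iff_coeff_zero _ _).1 (h _) m hge

end ANum

/-- Exact proportions of `a`-numbers of monic cubefree polynomials in characteristic 3,
for `g ≡ 0 (mod 3)`, `g ≥ 3`, `ε ∈ {1,2}`, or `g ≡ 2 (mod 3)`, `ε = 2`.  The `a`-number of
`f` is the `𝔽_q`-dimension of the space of polynomials `Q = Q₀³ + Q₁³X + Q₂³X²` of degree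
`< g` with `Q₂c₀(f) + Q₁c₁(f) + Q₀c₂(f) = 0`; having `a`-number `a` is expressed by this
solution space having exactly `q^a` elements.  The proportion `μ_{ε,g}(a)` (with denominator
`q^{2g+ε}(1-q⁻²)`, the number of monic cubefree polynomials of degree `2g+ε`) equals
`1 - q⁻¹` if `a = 0`; `q^{-2a+1}(1-q⁻²)` if `0 < a < ⌊(g+1)/3⌋`; `q^{-2a+1}` if
`a = ⌊(g+1)/3⌋`; and `0` if `a > ⌊(g+1)/3⌋`. -/
theorem proportion_aNumber_cubefree {F : Type*} [Field F] [Fintype F] [CharP F 3]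
    (q g ε a : ℕ) (hq : Fintype.card F = q)
    (hgε : (g % 3 = 0 ∧ 3 ≤ g ∧ (ε = 1 ∨ ε = 2)) ∨ (g % 3 = 2 ∧ ε = 2)) :
    (Nat.card {f : F[X] // f.Monic ∧ f.natDegree = 2 * g + ε ∧
        (∀ p : F[X], 0 < p.degree → ¬ p ^ 3 ∣ f) ∧
        Nat.card {Q : F[X] // Q.degree < (g : WithBot ℕ) ∧
          ∃ Q0 Q1 Q2 c0 c1 c2 : F[X],
            f = c0 ^ 3 + c1 ^ 3 * X + c2 ^ 3 * X ^ 2 ∧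
            Q = Q0 ^ 3 + Q1 ^ 3 * X + Q2 ^ 3 * X ^ 2 ∧
            Q2 * c0 + Q1 * c1 + Q0 * c2 = 0} = q ^ a} : ℚ) =
      (if a = 0 then 1 - (q : ℚ)⁻¹
       else if a < (g + 1) / 3 then (q : ℚ) ^ (1 - 2 * (a : ℤ)) * (1 - (q : ℚ) ^ (-2 : ℤ))
       else if a = (g + 1) / 3 then (q : ℚ) ^ (1 - 2 * (a : ℤ))
       else 0) *
      ((q : ℚ) ^ (2 * g + ε) * (1 - (q : ℚ) ^ (-2 : ℤ))) := by
  have hcast : (Fintype.card F : ℚ) ≠ 0 := by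
    have : 0 < Fintype.card F := Fintype.card_pos
    positivity
  subst hq
  have key : ∃ (M : ℕ) (j : Fin 3), 0 < M ∧ (g + 1) / 3 = M ∧ 2 * g + ε = 6 * M + j ∧
      ((g = 3 * M) ∨ (g = 3 * M - 1 ∧ j = 0)) := by
    rcases hgε with ⟨h1, h2, rfl | rfl⟩ | ⟨h1, rfl⟩
    · exact ⟨g / 3, 1, by omega, by omega, by change _ = _ + 1; omega, Or.inl (by omega)⟩
    · exact ⟨g / 3, 2, by omega, by omega, by change _ = _ + 2; omega, Or.inl (by omega)⟩
    · exact ⟨(g + 1) / 3, 0, by omega, rfl, by change _ = _ + 0; omega, Or.inr ⟨by omega, rfl⟩⟩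
  obtain ⟨M, j, hM, hgM, hn, hcase⟩ := key
  have h := ANum.aux (F := F) M g (2 * g + ε) a hM (ANum.LV j) (fun v hv => hv.ne_zero)
    (by rw [hn]; exact ANum.lead_iff M j)
    (by
      intro c Q v hv hc hd
      rcases hcase with rfl | ⟨rfl, rfl⟩
      · exact ANum.deg_iff M Q
      · exact ANum.deg_iff' M hM c Q v hv hc hd)
  rw [h, hgM, ANum.card_LV, hn, pow_add, ANum.dens]
  push_cast
  ring
end
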